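/- arXiv:2309.07977 — 6 statements merged into one kernel-verified Lean document; each statement's English description precedes it below -/
import Mathlib

section
/- Define Ψ₁₀ : [0,π] → ℝ by Ψ₁₀(x) := −(16/π) Σ_{j=0}^∞ cos((2j+1)x)/((2j+1)² − 4)². Then the series converges, Ψ₁₀ is twice continuously differentiable on [0,π], Ψ₁₀'(0) = Ψ₁₀'(π) = 0, ∫₀^π Ψ₁₀(x) cos(2x) dx = 0, and Ψ₁₀''(x) + 4Ψ₁₀(x) + 2 sin(2x) = 0 for all x ∈ (0,π). -/
open Set Real

noncomputable section

/-- `Ψ₁₀(x) = −(16/π) Σ_{j=0}^∞ cos((2j+1)x)/((2j+1)² − 4)²`. -/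
def Psi10 (x : ℝ) : ℝ :=
  -(16/π) * ∑' j : ℕ, Real.cos ((2 * (j:ℝ) + 1) * x) / ((2 * (j:ℝ) + 1)^2 - 4)^2

/-! The Neumann problem `u'' + 4u = -2 sin 2x` on `[0, π]` has the elementary solution
`u(x) = (x/2 - π/4) cos 2x - (1/4) sin 2x`. It is antisymmetric about `π/2`, so it is orthogonal to
`cos 2kx` for every `k`; two integrations by parts turn the equation into
`(n² - 4)² ∫₀^π u(x) cos nx dx = -8` for odd `n`. Thus `Ψ₁₀` is the cosine series of `u`, and
`Ψ₁₀ = u` on `[0, π]`. Since `Ψ₁₀` is moreover even about `0` and about `π`, the one-sided Neumann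
conditions of `u` at these points give two-sided ones for `Ψ₁₀`. -/

open scoped Topology

section CosineSeries

open MeasureTheory

lemma integral_neg_self_eq {E : Type*} [NormedAddCommGroup E] [NormedSpace ℝ E]
    {g : ℝ → E} {a : ℝ} (hg : IntervalIntegrable g volume (-a) a) :
    ∫ t in (-a)..a, g t = ∫ t in (0 : ℝ)..a, (g t + g (-t)) := by
  have hmem : 0 ∈ uIcc (-a) a := by
    rcases le_total 0 a with h | h <;> simp [h]
  have hneg : IntervalIntegrable g volume (-a) 0 :=
    hg.mono_set (uIcc_subset_uIcc_left hmem)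
  have hpos : IntervalIntegrable g volume 0 a :=
    hg.mono_set (uIcc_subset_uIcc_right hmem)
  have hnegComp : IntervalIntegrable (fun t ↦ g (-t)) volume 0 a := by
    simpa using ((IntervalIntegrable.iff_comp_neg (by simp)).1 hneg).symm
  rw [intervalIntegral.integral_add hpos hnegComp, intervalIntegral.integral_comp_neg, neg_zero,
    add_comm, intervalIntegral.integral_add_adjacent_intervals hneg hpos]

/-- The (unnormalised) cosine coefficient `∫₀^π f(t) cos(nt) dt`, indexed by all integers so that
the cosine series is a sum over `ℤ` in which the constant term needs no separate weight. -/
def cosineCoeff (f : ℝ → ℝ) (n : ℤ) : ℝ :=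
  ∫ t in (0 : ℝ)..π, f t * cos (n * t)

variable {f : ℝ → ℝ}

lemma cosineCoeff_neg (f : ℝ → ℝ) (n : ℤ) : cosineCoeff f (-n) = cosineCoeff f n := by
  simp [cosineCoeff]

lemma cosineCoeff_const_mul (c : ℝ) (f : ℝ → ℝ) (n : ℤ) :
    cosineCoeff (fun t ↦ c * f t) n = c * cosineCoeff f n := by
  simp [cosineCoeff, mul_assoc]

lemma cosineCoeff_congr {g : ℝ → ℝ} (h : EqOn f g (Icc 0 π)) (n : ℤ) :
    cosineCoeff f n = cosineCoeff g n :=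
  intervalIntegral.integral_congr fun t ht ↦ by
    rw [uIcc_of_le pi_pos.le] at ht
    simp only [h ht]

lemma cosineCoeff_two_mul_eq_zero (h : ∀ x ∈ Icc 0 π, f (π - x) = -f x) (k : ℤ) :
    cosineCoeff f (2 * k) = 0 := by
  have reflect : ∫ t in (0 : ℝ)..π, f (π - t) * cos ((2 * k : ℤ) * (π - t)) =
      cosineCoeff f (2 * k) := by
    simpa [cosineCoeff] using intervalIntegral.integral_comp_sub_left
      (a := 0) (b := π) (fun t ↦ f t * cos ((2 * k : ℤ) * t)) π
  have negate : ∫ t in (0 : ℝ)..π, f (π - t) * cos ((2 * k : ℤ) * (π - t)) =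
      -cosineCoeff f (2 * k) := by
    rw [cosineCoeff, ← intervalIntegral.integral_neg]
    refine intervalIntegral.integral_congr fun t ht ↦ ?_
    rw [uIcc_of_le pi_pos.le] at ht
    have hcos : cos ((2 * k : ℤ) * (π - t)) = cos ((2 * k : ℤ) * t) := by
      rw [← cos_int_mul_two_pi_sub _ k]
      push_cast
      ring_nf
    simp only [h t ht, hcos, neg_mul]
  linarith

lemma sq_sub_mul_cosineCoeff {u u' g : ℝ → ℝ} {c : ℝ}
    (hu : ∀ x ∈ uIcc 0 π, HasDerivAt u (u' x) x)
    (hu' : ∀ x ∈ uIcc 0 π, HasDerivAt u' (g x - c * u x) x)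
    (hg : IntervalIntegrable g volume 0 π) (n : ℤ) :
    (n ^ 2 - c) * cosineCoeff u n = cos (n * π) * u' π - u' 0 - cosineCoeff g n := by
  have hcos : Continuous fun x : ℝ ↦ cos (n * x) := by fun_prop
  have hgcos := hg.mul_continuousOn hcos.continuousOn
  have hucos : IntervalIntegrable (fun x ↦ u x * cos (n * x)) volume 0 π :=
    ContinuousOn.intervalIntegrable fun x hx ↦
      ((hu x hx).continuousAt.mul hcos.continuousAt).continuousWithinAt
  have hprim : ∀ x ∈ uIcc 0 π, HasDerivAt (fun x ↦ u' x * cos (n * x) + n * (u x * sin (n * x)))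
      (g x * cos (n * x) + (n ^ 2 - c) * (u x * cos (n * x))) x := fun x hx ↦ by
    have hlin : HasDerivAt (fun x : ℝ ↦ (n : ℝ) * x) n x := by
      simpa using (hasDerivAt_id x).const_mul (n : ℝ)
    refine (((hu' x hx).mul hlin.cos).add
      (((hu x hx).mul hlin.sin).const_mul (n : ℝ))).congr_deriv ?_
    ring
  have integral_hprim := intervalIntegral.integral_eq_sub_of_hasDerivAt hprim
    (hgcos.add (hucos.const_mul _))
  rw [intervalIntegral.integral_add hgcos (hucos.const_mul _),
    intervalIntegral.integral_const_mul] at integral_hprim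
  simp only [sin_int_mul_pi, mul_zero, sin_zero, cos_zero, mul_one, add_zero] at integral_hprim
  unfold cosineCoeff
  linarith

lemma neg_pi_add_two_pi : -π + 2 * π = π := by ring

local instance fact_two_pi_pos : Fact (0 < 2 * π) := ⟨two_pi_pos⟩

/-- The even `2π`-periodic extension of `f|_[0, π]`, as a complex function on the circle `ℝ/2πℤ`. -/
def evenPeriodization (f : ℝ → ℝ) : AddCircle (2 * π) → ℂ :=
  AddCircle.liftIco (2 * π) (-π) fun t ↦ (f |t| : ℂ)

lemma continuous_evenPeriodization (hf : ContinuousOn f (Icc 0 π)) :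
    Continuous (evenPeriodization f) := by
  refine AddCircle.liftIco_continuous (by simp [neg_pi_add_two_pi]) ?_
  rw [neg_pi_add_two_pi]
  exact Complex.continuous_ofReal.comp_continuousOn <|
    hf.comp continuous_abs.continuousOn fun t ht ↦ ⟨abs_nonneg t, abs_le.2 ht⟩

lemma evenPeriodization_coe {t : ℝ} (ht : t ∈ Icc (-π) π) :
    evenPeriodization f (t : AddCircle (2 * π)) = f |t| := by
  have on_Ico {s : ℝ} (hs : s ∈ Ico (-π) π) :
      evenPeriodization f (s : AddCircle (2 * π)) = f |s| :=
    AddCircle.liftIco_coe_apply (by rwa [neg_pi_add_two_pi])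
  obtain rfl | hlt := ht.2.eq_or_lt
  · rw [← abs_neg, ← on_Ico (left_mem_Ico.2 (neg_lt_self pi_pos)),
      ← AddCircle.coe_add_period (2 * π) (-π), neg_pi_add_two_pi]
  · exact on_Ico ⟨ht.1, hlt⟩

lemma fourier_two_pi_coe (n : ℤ) (x : ℝ) :
    fourier n (x : AddCircle (2 * π)) = Complex.exp ((n * x : ℝ) * Complex.I) := by
  rw [fourier_coe_apply]
  congr 1
  push_cast
  field_simp

lemma fourierCoeff_evenPeriodization (hf : ContinuousOn f (Icc 0 π)) (n : ℤ) :
    fourierCoeff (evenPeriodization f) n = (1 / π * cosineCoeff f n : ℝ) := by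
  let g : ℝ → ℂ := fun t ↦
    fourier (-n) (t : AddCircle (2 * π)) • evenPeriodization f (t : AddCircle (2 * π))
  have hg : Continuous g :=
    ((map_continuous (fourier (-n))).smul (continuous_evenPeriodization hf)).comp
      (AddCircle.continuous_mk' _)
  have hfold : ∀ t ∈ uIcc 0 π, g t + g (-t) = (2 * (f t * cos (n * t)) : ℝ) := fun t ht ↦ by
    rw [uIcc_of_le pi_pos.le] at ht
    simp only [g, smul_eq_mul, fourier_two_pi_coe, abs_neg, abs_of_nonneg ht.1,
      evenPeriodization_coe (f := f) (t := t) ⟨by linarith [ht.1, pi_pos], ht.2⟩,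
      evenPeriodization_coe (f := f) (t := -t) ⟨by linarith [ht.2], by linarith [ht.1, pi_pos]⟩]
    have htwo := Complex.two_cos ((n * t : ℝ) : ℂ)
    push_cast at htwo ⊢
    rw [mul_left_comm, htwo]
    ring_nf
  calc fourierCoeff (evenPeriodization f) n
      = (1 / (2 * π)) • ∫ t in (-π)..π, g t := by
        rw [fourierCoeff_eq_intervalIntegral _ _ (-π), neg_pi_add_two_pi]
    _ = (1 / (2 * π)) • ∫ t in (0 : ℝ)..π, ((2 * (f t * cos (n * t)) : ℝ) : ℂ) := by
        rw [integral_neg_self_eq (hg.intervalIntegrable _ _), intervalIntegral.integral_congr hfold]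
    _ = (1 / π * cosineCoeff f n : ℝ) := by
        rw [intervalIntegral.integral_ofReal, intervalIntegral.integral_const_mul,
          Complex.real_smul, ← Complex.ofReal_mul, cosineCoeff]
        congr 1
        field_simp

lemma hasSum_cosineSeries (hf : ContinuousOn f (Icc 0 π)) (hs : Summable (cosineCoeff f))
    {x : ℝ} (hx : x ∈ Icc 0 π) :
    HasSum (fun n : ℤ ↦ 1 / π * cosineCoeff f n * cos (n * x)) (f x) := by
  let F : C(AddCircle (2 * π), ℂ) := ⟨evenPeriodization f, continuous_evenPeriodization hf⟩
  have hcoeff : fourierCoeff F = fun n ↦ ((1 / π * cosineCoeff f n : ℝ) : ℂ) :=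
    funext (fourierCoeff_evenPeriodization hf)
  have hsF : Summable (fourierCoeff F) := by
    rw [hcoeff]
    exact Complex.hasSum_ofReal.2 (hs.mul_left _).hasSum |>.summable
  have hre := Complex.hasSum_re (has_pointwise_sum_fourier_series_of_summable hsF x)
  have hFx : F (x : AddCircle (2 * π)) = f x := by
    conv_rhs => rw [← abs_of_nonneg hx.1]
    exact evenPeriodization_coe ⟨by linarith [hx.1, pi_pos], hx.2⟩
  rw [hFx, Complex.ofReal_re] at hre
  refine hre.congr_fun fun n ↦ ?_
  rw [hcoeff, fourier_two_pi_coe, smul_eq_mul, Complex.re_ofReal_mul, Complex.exp_ofReal_mul_I_re]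

lemma hasSum_odd_cosineSeries (hf : ContinuousOn f (Icc 0 π))
    (hsymm : ∀ x ∈ Icc 0 π, f (π - x) = -f x)
    (hs : Summable fun j : ℕ ↦ cosineCoeff f (2 * j + 1)) {x : ℝ} (hx : x ∈ Icc 0 π) :
    HasSum (fun j : ℕ ↦ 2 / π * cosineCoeff f (2 * j + 1) * cos ((2 * j + 1) * x)) (f x) := by
  have hinj : Function.Injective fun k : ℤ ↦ 2 * k + 1 := fun a b h ↦ by lia
  have heven : ∀ n ∉ range (fun k : ℤ ↦ 2 * k + 1), cosineCoeff f n = 0 := fun n hn ↦ by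
    obtain ⟨k, rfl | rfl⟩ := n.even_or_odd'
    · exact cosineCoeff_two_mul_eq_zero hsymm k
    · exact absurd ⟨k, rfl⟩ hn
  have hneg (j : ℕ) : 2 * (-((j : ℤ) + 1)) + 1 = -(2 * j + 1) := by ring
  have hsZ : Summable (cosineCoeff f) := by
    refine (hinj.summable_iff heven).1 (.of_nat_of_neg_add_one hs ?_)
    simpa only [Function.comp_apply, hneg, cosineCoeff_neg] using hs
  have hodd := (hinj.hasSum_iff fun n hn ↦ by simp [heven n hn]).2 (hasSum_cosineSeries hf hsZ hx)
  refine hodd.nat_add_neg_add_one.congr_fun fun j ↦ ?_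
  simp only [Function.comp_apply, hneg, cosineCoeff_neg]
  push_cast
  rw [neg_mul, cos_neg]
  ring

end CosineSeries

lemma hasDerivAt_zero_of_reflection {E : Type*} [NormedAddCommGroup E] [NormedSpace ℝ E]
    {f : ℝ → E} {a : ℝ} {s : Set ℝ} (hf : HasDerivWithinAt f 0 s a)
    (hsymm : ∀ x, f (2 * a - x) = f x) (hs : s ∪ (2 * a - ·) ⁻¹' s ∈ 𝓝 a) :
    HasDerivAt f 0 a := by
  have hfix : 2 * a - a = a := by ring
  have hrefl : HasDerivWithinAt f 0 ((2 * a - ·) ⁻¹' s) a := by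
    rw [← hfix] at hf
    simpa [Function.comp_def, hsymm] using
      hf.scomp a ((hasDerivWithinAt_id a _).const_sub (2 * a)) (mapsTo_preimage _ s)
  exact (hf.union hrefl).hasDerivAt hs

/-- The elementary solution of the Neumann problem `u'' + 4u = -2 sin 2x` on `[0, π]` that is
orthogonal to `cos 2x`; it represents `Psi10` on `[0, π]` only. -/
def neumannSolution (x : ℝ) : ℝ :=
  (x / 2 - π / 4) * cos (2 * x) - sin (2 * x) / 4

lemma hasDerivAt_sin_two_mul (x : ℝ) :
    HasDerivAt (fun x ↦ sin (2 * x)) (2 * cos (2 * x)) x := by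
  simpa [mul_comm] using ((hasDerivAt_id x).const_mul 2).sin

lemma hasDerivAt_cos_two_mul (x : ℝ) :
    HasDerivAt (fun x ↦ cos (2 * x)) (-2 * sin (2 * x)) x := by
  simpa [mul_comm] using ((hasDerivAt_id x).const_mul 2).cos

lemma hasDerivAt_neumannSolution (x : ℝ) :
    HasDerivAt neumannSolution ((π / 2 - x) * sin (2 * x)) x := by
  refine (((((hasDerivAt_id x).div_const 2).sub_const (π / 4)).mul
    (hasDerivAt_cos_two_mul x)).sub ((hasDerivAt_sin_two_mul x).div_const 4)).congr_deriv ?_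
  simp only [id]
  ring

lemma hasDerivAt_deriv_neumannSolution (x : ℝ) :
    HasDerivAt (fun x ↦ (π / 2 - x) * sin (2 * x))
      (-2 * sin (2 * x) - 4 * neumannSolution x) x := by
  refine (((hasDerivAt_id x).const_sub (π / 2)).mul (hasDerivAt_sin_two_mul x)).congr_deriv ?_
  simp only [id, neumannSolution]
  ring

lemma contDiff_neumannSolution {n : WithTop ℕ∞} : ContDiff ℝ n neumannSolution := by
  unfold neumannSolution
  fun_prop

lemma neumannSolution_pi_sub (x : ℝ) : neumannSolution (π - x) = -neumannSolution x := by
  have h : 2 * (π - x) = 2 * π - 2 * x := by ring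
  simp only [neumannSolution, h, cos_two_pi_sub, sin_two_pi_sub]
  ring

lemma cos_odd_mul_pi (j : ℕ) : cos ((2 * (j : ℤ) + 1 : ℤ) * π) = -1 := by
  rw [cos_int_mul_pi]
  exact Odd.neg_one_zpow ⟨j, rfl⟩

lemma add_one_le_abs_odd_sq_sub_four (j : ℕ) : (j : ℝ) + 1 ≤ |(2 * (j : ℝ) + 1) ^ 2 - 4| := by
  rcases j with _ | j
  · norm_num
  · push_cast
    exact le_abs.2 (.inl (by nlinarith [j.cast_nonneg (α := ℝ)]))

lemma odd_sq_sub_four_ne_zero (j : ℕ) : (2 * (j : ℝ) + 1) ^ 2 - 4 ≠ 0 :=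
  abs_pos.1 (j.cast_add_one_pos.trans_le (add_one_le_abs_odd_sq_sub_four j))

lemma summable_inv_odd_sq_sub_four_sq :
    Summable fun j : ℕ ↦ (((2 * (j : ℝ) + 1) ^ 2 - 4) ^ 2)⁻¹ := by
  have hsq : Summable fun j : ℕ ↦ (((j : ℝ) + 1) ^ 2)⁻¹ := by
    simpa using (summable_nat_add_iff 1).2 (summable_nat_pow_inv.2 one_lt_two)
  refine hsq.of_nonneg_of_le (fun j ↦ by positivity) fun j ↦ ?_
  rw [← sq_abs ((2 * (j : ℝ) + 1) ^ 2 - 4)]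
  gcongr
  exact add_one_le_abs_odd_sq_sub_four j

lemma cosineCoeff_sin_two_mul_odd (j : ℕ) :
    cosineCoeff (fun x ↦ sin (2 * x)) (2 * j + 1) = -4 / ((2 * j + 1) ^ 2 - 4) := by
  have h := sq_sub_mul_cosineCoeff (g := 0) (c := 4) (fun x _ ↦ hasDerivAt_sin_two_mul x)
    (fun x _ ↦ ((hasDerivAt_cos_two_mul x).const_mul 2).congr_deriv
      (by simp only [Pi.zero_apply]; ring))
    intervalIntegrable_const (2 * j + 1)
  have hzero : cosineCoeff 0 (2 * j + 1) = 0 := by simp [cosineCoeff]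
  rw [cos_odd_mul_pi, hzero] at h
  push_cast at h
  rw [eq_div_iff (odd_sq_sub_four_ne_zero j), mul_comm, h]
  norm_num

lemma cosineCoeff_neumannSolution_odd (j : ℕ) :
    cosineCoeff neumannSolution (2 * j + 1) = -8 / ((2 * j + 1) ^ 2 - 4) ^ 2 := by
  have h := sq_sub_mul_cosineCoeff (fun x _ ↦ hasDerivAt_neumannSolution x)
    (fun x _ ↦ hasDerivAt_deriv_neumannSolution x)
    (Continuous.intervalIntegrable (by fun_prop) _ _) (2 * j + 1)
  have hne := odd_sq_sub_four_ne_zero j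
  rw [cosineCoeff_const_mul, cosineCoeff_sin_two_mul_odd, mul_zero 2, sin_zero] at h
  simp only [sin_two_pi, mul_zero] at h
  push_cast at h
  rw [eq_div_iff (pow_ne_zero 2 hne), sq, ← mul_assoc, mul_comm (cosineCoeff _ _), h]
  field_simp
  norm_num

lemma summable_Psi10_terms (x : ℝ) :
    Summable fun j : ℕ ↦ cos ((2 * (j : ℝ) + 1) * x) / ((2 * (j : ℝ) + 1) ^ 2 - 4) ^ 2 := by
  refine .of_norm_bounded summable_inv_odd_sq_sub_four_sq fun j ↦ ?_
  rw [norm_div, div_eq_mul_inv, norm_of_nonneg (sq_nonneg (_ : ℝ))]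
  exact mul_le_of_le_one_left (by positivity) (abs_cos_le_one _)

lemma eqOn_Psi10_neumannSolution : EqOn Psi10 neumannSolution (Icc 0 π) := fun x hx ↦ by
  have hs : Summable fun j : ℕ ↦ cosineCoeff neumannSolution (2 * j + 1) := by
    simpa only [cosineCoeff_neumannSolution_odd, div_eq_mul_inv] using
      summable_inv_odd_sq_sub_four_sq.mul_left (-8)
  have hsum := hasSum_odd_cosineSeries (contDiff_neumannSolution (n := 0)).continuous.continuousOn
    (fun x _ ↦ neumannSolution_pi_sub x) hs hx
  rw [Psi10, ← tsum_mul_left, ← hsum.tsum_eq]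
  refine tsum_congr fun j ↦ ?_
  rw [cosineCoeff_neumannSolution_odd]
  ring

lemma Psi10_reflect (m : ℤ) (x : ℝ) : Psi10 (2 * (m * π) - x) = Psi10 x := by
  have hcos (j : ℕ) : cos ((2 * (j : ℝ) + 1) * (2 * (m * π) - x)) =
      cos ((2 * (j : ℝ) + 1) * x) := by
    rw [← cos_int_mul_two_pi_sub _ ((2 * j + 1) * m)]
    push_cast
    ring_nf
  simp only [Psi10, hcos]

lemma hasDerivWithinAt_Psi10 {x : ℝ} (hx : x ∈ Icc 0 π) :
    HasDerivWithinAt Psi10 ((π / 2 - x) * sin (2 * x)) (Icc 0 π) x :=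
  (hasDerivAt_neumannSolution x).hasDerivWithinAt.congr_of_mem eqOn_Psi10_neumannSolution hx

lemma hasDerivAt_Psi10_zero : HasDerivAt Psi10 0 0 := by
  refine hasDerivAt_zero_of_reflection (s := Icc 0 π)
    (by simpa using hasDerivWithinAt_Psi10 (left_mem_Icc.2 pi_pos.le))
    (fun x ↦ by simpa using Psi10_reflect 0 x) ?_
  filter_upwards [Ioo_mem_nhds (neg_lt_zero.2 pi_pos) pi_pos] with x hx
  rcases le_total 0 x with h | h
  · exact .inl ⟨h, hx.2.le⟩
  · exact .inr ⟨by linarith, by linarith [hx.1]⟩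

lemma hasDerivAt_Psi10_pi : HasDerivAt Psi10 0 π := by
  refine hasDerivAt_zero_of_reflection (s := Icc 0 π)
    (by simpa using hasDerivWithinAt_Psi10 (right_mem_Icc.2 pi_pos.le))
    (fun x ↦ by simpa using Psi10_reflect 1 x) ?_
  filter_upwards [Ioo_mem_nhds pi_pos (lt_two_mul_self pi_pos)] with x hx
  rcases le_total x π with h | h
  · exact .inl ⟨hx.1.le, h⟩
  · exact .inr ⟨by linarith [hx.2], by linarith⟩

lemma deriv_deriv_Psi10 {x : ℝ} (hx : x ∈ Ioo 0 π) :
    deriv (deriv Psi10) x = -2 * sin (2 * x) - 4 * Psi10 x := by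
  have hderiv : EqOn (deriv Psi10) (fun x ↦ (π / 2 - x) * sin (2 * x)) (Ioo 0 π) := fun y hy ↦
    ((hasDerivWithinAt_Psi10 (Ioo_subset_Icc_self hy)).hasDerivAt (Icc_mem_nhds hy.1 hy.2)).deriv
  rw [(hderiv.eventuallyEq_of_mem (Ioo_mem_nhds hx.1 hx.2)).deriv_eq,
    (hasDerivAt_deriv_neumannSolution x).deriv,
    eqOn_Psi10_neumannSolution (Ioo_subset_Icc_self hx)]

/-- The series defining `Ψ₁₀` converges, `Ψ₁₀` is `C²` on `[0,π]`,
has vanishing derivative at the endpoints, is orthogonal to `cos(2x)` on `(0,π)`, and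
solves `Ψ₁₀'' + 4Ψ₁₀ + 2 sin(2x) = 0` on `(0,π)`. -/
theorem Psi10_properties :
    (∀ x : ℝ, Summable (fun j : ℕ => Real.cos ((2 * (j:ℝ) + 1) * x) / ((2 * (j:ℝ) + 1)^2 - 4)^2)) ∧
    ContDiffOn ℝ 2 Psi10 (Set.Icc 0 π) ∧
    deriv Psi10 0 = 0 ∧ deriv Psi10 π = 0 ∧
    (∫ x in (0:ℝ)..π, Psi10 x * Real.cos (2*x)) = 0 ∧
    (∀ x ∈ Set.Ioo (0:ℝ) π,
      deriv (deriv Psi10) x + 4 * Psi10 x + 2 * Real.sin (2*x) = 0) := by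
  have horth : cosineCoeff Psi10 (2 * 1) = 0 := by
    rw [cosineCoeff_congr eqOn_Psi10_neumannSolution]
    exact cosineCoeff_two_mul_eq_zero (fun x _ ↦ neumannSolution_pi_sub x) 1
  refine ⟨summable_Psi10_terms, contDiff_neumannSolution.contDiffOn.congr
    eqOn_Psi10_neumannSolution, hasDerivAt_Psi10_zero.deriv, hasDerivAt_Psi10_pi.deriv, ?_, ?_⟩
  · simpa [cosineCoeff] using horth
  · intro x hx
    rw [deriv_deriv_Psi10 hx]
    ring

end
end

section
/- Let Φ₁₀ : [0,π] → ℝ be defined by Φ₁₀(x) := (4/π) Σ_{k=1}^∞ [2k(4k² − 13)/(1 − 4k²)³] sin(2kx). Then (2/π) ∫₀^π ( Φ₁₀'(x) − (π/2 − x) cos(x) − 3(π − 2x) Φ₁₀(x) + (3/4)(π² − 12πx + 12x²) sin(x) ) sin(x) dx = −16. -/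
open Set Real

noncomputable section

/-- The `k`-th Fourier coefficient in the series defining `Φ₁₀`. -/
def phiCoeff (k : ℕ) : ℝ := 2 * (k:ℝ) * (4 * (k:ℝ)^2 - 13) / (1 - 4 * (k:ℝ)^2)^3

/-- `Φ₁₀(x) = (4/π) Σ_{k=1}^∞ [2k(4k²−13)/(1−4k²)³] sin(2kx)`. -/
def Phi10 (x : ℝ) : ℝ :=
  (4/π) * ∑' k : ℕ, phiCoeff (k + 1) * Real.sin (2 * ((k:ℝ) + 1) * x)

/-!
On `[0, π]` the series is the elementary function `φ(x) = (3/2) x (π - x) cos x - (π - 2x) sin x`.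
Write `L = ∂² + 1` and `g(x) = (π - 2x) sin x`. Then `L φ = cos - 3 g`, `L g = -4 cos` and
`L cos = 0`, and `L` multiplies the `n`-th Fourier coefficient on `[0, π]` by `1 - 4n²`, up to
boundary terms. Solving this triangular system gives the coefficients of `φ`, with the cube of
`1 - 4n²` in the denominator. Since `φ` and `φ'` take equal values at `0` and `π`, the Fourier
series of `φ` converges to it pointwise, and the integral becomes that of an elementary function.
-/

section FourierOnInterval

open MeasureTheory Complex

variable {a b : ℝ}

lemma fourierCoeffOn_sub {E : Type*} [NormedAddCommGroup E] [NormedSpace ℂ E] (hab : a < b)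
    {f g : ℝ → E} (hf : IntervalIntegrable f volume a b) (hg : IntervalIntegrable g volume a b)
    (n : ℤ) :
    fourierCoeffOn hab (fun x => f x - g x) n
      = fourierCoeffOn hab f n - fourierCoeffOn hab g n := by
  have hcont : ContinuousOn (fun x : ℝ => fourier (-n) (x : AddCircle (b - a))) (uIcc a b) :=
    ((map_continuous (fourier (-n))).comp (AddCircle.continuous_mk' _)).continuousOn
  simp only [fourierCoeffOn_eq_integral, smul_sub]
  rw [intervalIntegral.integral_sub (hf.continuousOn_smul hcont) (hg.continuousOn_smul hcont),
    smul_sub]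

lemma norm_fourierCoeffOn_le {E : Type*} [NormedAddCommGroup E] [NormedSpace ℂ E] (hab : a < b)
    (f : ℝ → E) (n : ℤ) :
    ‖fourierCoeffOn hab f n‖ ≤ (1 / (b - a)) * ∫ x in a..b, ‖f x‖ := by
  have : 0 < b - a := sub_pos.mpr hab
  rw [fourierCoeffOn_eq_integral, norm_smul, Real.norm_of_nonneg (by positivity)]
  gcongr
  refine (intervalIntegral.norm_integral_le_integral_norm hab.le).trans_eq ?_
  simp only [norm_smul, fourier_apply, Circle.norm_coe, one_mul]

lemma fourierCoeffOn_deriv (hab : a < b) {f f' : ℝ → ℂ}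
    (hf : ∀ x ∈ uIcc a b, HasDerivAt f (f' x) x) (hf' : IntervalIntegrable f' volume a b) (n : ℤ) :
    fourierCoeffOn hab f' n = (2 * π * I * n * fourierCoeffOn hab f n
      + fourier (-n) (a : AddCircle (b - a)) * (f b - f a)) / (b - a) := by
  rcases eq_or_ne n 0 with rfl | hn
  · simp only [fourierCoeffOn_eq_integral, neg_zero, fourier_zero, one_smul,
      intervalIntegral.integral_eq_sub_of_hasDerivAt hf hf', real_smul]
    push_cast
    ring
  · have hlen : (b - a : ℂ) ≠ 0 := by exact_mod_cast (sub_pos.mpr hab).ne'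
    have hn' : (n : ℂ) ≠ 0 := by exact_mod_cast hn
    have hπ : (π : ℂ) ≠ 0 := by exact_mod_cast pi_ne_zero
    rw [fourierCoeffOn_of_hasDerivAt hab hn hf hf']
    field_simp
    ring

lemma fourierCoeffOn_deriv_deriv (hab : a < b) {f f' f'' : ℝ → ℂ}
    (hf : ∀ x ∈ uIcc a b, HasDerivAt f (f' x) x) (hf' : ∀ x ∈ uIcc a b, HasDerivAt f' (f'' x) x)
    (hf'' : IntervalIntegrable f'' volume a b) (n : ℤ) :
    fourierCoeffOn hab f'' n = -(2 * π * n / (b - a)) ^ 2 * fourierCoeffOn hab f n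
      + fourier (-n) (a : AddCircle (b - a))
        * (2 * π * I * n / (b - a) * (f b - f a) + (f' b - f' a)) / (b - a) := by
  have hf'_int : IntervalIntegrable f' volume a b :=
    ContinuousOn.intervalIntegrable fun x hx => (hf' x hx).continuousAt.continuousWithinAt
  have hlen : (b - a : ℂ) ≠ 0 := by exact_mod_cast (sub_pos.mpr hab).ne'
  rw [fourierCoeffOn_deriv hab hf' hf'', fourierCoeffOn_deriv hab hf hf'_int]
  field_simp
  linear_combination (4 * π ^ 2 * n ^ 2 * fourierCoeffOn hab f n) * I_sq

lemma summable_fourierCoeffOn_of_hasDerivAt (hab : a < b) {f f' f'' : ℝ → ℂ}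
    (hf : ∀ x ∈ uIcc a b, HasDerivAt f (f' x) x) (hf' : ∀ x ∈ uIcc a b, HasDerivAt f' (f'' x) x)
    (hf'' : IntervalIntegrable f'' volume a b) (hfab : f a = f b) (hfab' : f' a = f' b) :
    Summable (fourierCoeffOn hab f) := by
  have hlen : 0 < b - a := sub_pos.mpr hab
  set M := (1 / (b - a)) * ∫ x in a..b, ‖f'' x‖
  have hbound : ∀ n : ℤ, n ≠ 0 →
      ‖fourierCoeffOn hab f n‖ ≤ ((b - a) / (2 * π)) ^ 2 * M * (1 / (n : ℝ) ^ 2) := by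
    intro n hn
    have : 0 < (n : ℝ) ^ 2 := by positivity
    have hcoeff : fourierCoeffOn hab f'' n
        = -((2 * π * n / (b - a) : ℝ) : ℂ) ^ 2 * fourierCoeffOn hab f n := by
      rw [fourierCoeffOn_deriv_deriv hab hf hf' hf'', hfab, hfab']
      push_cast
      ring
    have hnorm : (2 * π * n / (b - a)) ^ 2 * ‖fourierCoeffOn hab f n‖ ≤ M := by
      simpa only [hcoeff, norm_mul, norm_neg, norm_pow, norm_real, Real.norm_eq_abs, sq_abs]
        using norm_fourierCoeffOn_le hab f'' n
    calc ‖fourierCoeffOn hab f n‖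
        = ((b - a) / (2 * π)) ^ 2 * ((2 * π * n / (b - a)) ^ 2 * ‖fourierCoeffOn hab f n‖)
            * (1 / (n : ℝ) ^ 2) := by field_simp
      _ ≤ ((b - a) / (2 * π)) ^ 2 * M * (1 / (n : ℝ) ^ 2) := by gcongr
  refine Summable.of_norm_bounded_eventually
    ((Real.summable_one_div_int_pow.mpr one_lt_two).mul_left (((b - a) / (2 * π)) ^ 2 * M)) ?_
  filter_upwards [(finite_singleton (0 : ℤ)).compl_mem_cofinite] with n hn
  exact hbound n hn

lemma hasSum_fourierCoeffOn (hab : a < b) {f : ℝ → ℂ} (hf : ContinuousOn f (Icc a b))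
    (hfab : f a = f b) (hsum : Summable (fourierCoeffOn hab f)) {x : ℝ} (hx : x ∈ Icc a b) :
    HasSum (fun n : ℤ => fourierCoeffOn hab f n • fourier n (x : AddCircle (b - a))) (f x) := by
  have : Fact (0 < b - a) := ⟨sub_pos.mpr hab⟩
  have hb : a + (b - a) = b := add_sub_cancel a b
  let F : C(AddCircle (b - a), ℂ) :=
    ⟨AddCircle.liftIoc (b - a) a f, AddCircle.liftIoc_continuous (by rwa [hb]) (by rwa [hb])⟩
  have hFx : F (x : AddCircle (b - a)) = f x := by
    rcases hx.1.eq_or_lt with rfl | hax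
    · have hcoe : ((a : ℝ) : AddCircle (b - a)) = (b : ℝ) := by
        simpa only [hb] using (AddCircle.coe_add_period (b - a) a).symm
      rw [hfab, hcoe]
      exact AddCircle.liftIoc_coe_apply ⟨hab, hb.ge⟩
    · exact AddCircle.liftIoc_coe_apply ⟨hax, hx.2.trans hb.ge⟩
  rw [← hFx]
  exact has_pointwise_sum_fourier_series_of_summable (f := F) hsum x

lemma hasSum_sin_of_odd {T x : ℝ} {c : ℤ → ℂ} {s : ℂ} (hodd : ∀ n, c (-n) = -c n)
    (hs : HasSum (fun n : ℤ => c n • fourier n (x : AddCircle T)) s) :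
    HasSum (fun n : ℕ => 2 * I * c (n + 1) * Complex.sin (2 * π * (n + 1) * x / T)) s := by
  have hc0 : c 0 = 0 := self_eq_neg.mp (by simpa only [neg_zero] using hodd 0)
  have hpair (n : ℕ) : c n • fourier n (x : AddCircle T) + c (-n) • fourier (-n) (x : AddCircle T)
      = 2 * I * c n * Complex.sin (2 * π * n * x / T) := by
    have hpos : 2 * π * I * (n : ℤ) * x / T = (2 * π * n * x / T) * I := by push_cast; ring
    have hneg : 2 * π * I * (-n : ℤ) * x / T = -(2 * π * n * x / T) * I := by push_cast; ring
    rw [hodd, fourier_coe_apply, fourier_coe_apply, hpos, hneg, exp_mul_I, exp_mul_I,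
      Complex.cos_neg, Complex.sin_neg, smul_eq_mul, smul_eq_mul]
    ring
  have hnat := hs.nat_add_neg
  simp only [hpair, hc0, zero_smul, add_zero] at hnat
  simpa using (hasSum_nat_add_iff' 1).mpr hnat

end FourierOnInterval

section ClosedForm

open Complex

/-- The closed form `φ` of `Φ₁₀` on `[0, π]`. It is defined on all of `ℝ`, but it is not
`π`-periodic and differs from the series outside that interval. -/
def phiClosed (x : ℝ) : ℝ := 3 / 2 * x * (π - x) * Real.cos x - (π - 2 * x) * Real.sin x

/-- The derivative of `phiClosed`. -/
def phiClosedDeriv (x : ℝ) : ℝ :=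
  1 / 2 * (π - 2 * x) * Real.cos x + (2 - 3 / 2 * x * (π - x)) * Real.sin x

lemma hasDerivAt_pi_sub_two_mul (x : ℝ) : HasDerivAt (fun y : ℝ => π - 2 * y) (-2) x := by
  simpa using ((hasDerivAt_id' x).const_mul 2).const_sub π

lemma hasDerivAt_mul_pi_sub (x : ℝ) :
    HasDerivAt (fun y : ℝ => 3 / 2 * y * (π - y)) (3 / 2 * (π - 2 * x)) x := by
  refine (((hasDerivAt_id' x).const_mul (3 / 2)).fun_mul
    ((hasDerivAt_id' x).const_sub π)).congr_deriv ?_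
  ring

lemma hasDerivAt_phiClosed (x : ℝ) : HasDerivAt phiClosed (phiClosedDeriv x) x := by
  refine (((hasDerivAt_mul_pi_sub x).fun_mul (Real.hasDerivAt_cos x)).fun_sub
    ((hasDerivAt_pi_sub_two_mul x).fun_mul (Real.hasDerivAt_sin x))).congr_deriv ?_
  rw [phiClosedDeriv]
  ring

lemma hasDerivAt_phiClosedDeriv (x : ℝ) :
    HasDerivAt phiClosedDeriv
      (Real.cos x - 3 * ((π - 2 * x) * Real.sin x) - phiClosed x) x := by
  refine ((((hasDerivAt_pi_sub_two_mul x).const_mul (1 / 2)).fun_mul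
    (Real.hasDerivAt_cos x)).fun_add (((hasDerivAt_mul_pi_sub x).const_sub 2).fun_mul
    (Real.hasDerivAt_sin x))).congr_deriv ?_
  rw [phiClosed]
  ring

lemma one_sub_four_mul_sq_ne_zero (n : ℤ) : (1 - 4 * n ^ 2 : ℂ) ≠ 0 := by
  have h : (1 - 4 * n ^ 2 : ℤ) ≠ 0 := by omega
  exact_mod_cast h

lemma fourierCoeffOn_of_deriv_deriv_eq_sub {f f' h : ℝ → ℝ} (hf : ∀ x, HasDerivAt f (f' x) x)
    (hf' : ∀ x, HasDerivAt f' (h x - f x) x) (hh : Continuous h) (n : ℤ) :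
    fourierCoeffOn pi_pos (fun x => (f x : ℂ)) n =
      (fourierCoeffOn pi_pos (fun x => (h x : ℂ)) n
        - (2 * I * n * (f π - f 0) + (f' π - f' 0)) / π) / (1 - 4 * n ^ 2) := by
  have hπ : (π : ℂ) ≠ 0 := by exact_mod_cast pi_ne_zero
  have hf_cont : Continuous f := continuous_iff_continuousAt.mpr fun x => (hf x).continuousAt
  have hsecond := fourierCoeffOn_deriv_deriv pi_pos (fun x _ => (hf x).ofReal_comp)
    (fun x _ => (hf' x).ofReal_comp) (Continuous.intervalIntegrable (by fun_prop) _ _) n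
  have hsub := fourierCoeffOn_sub pi_pos (f := fun x => (h x : ℂ)) (g := fun x => (f x : ℂ))
    (Continuous.intervalIntegrable (by fun_prop) _ _)
    (Continuous.intervalIntegrable (by fun_prop) _ _) n
  simp only [ofReal_sub, hsub, fourier_coe_apply, ofReal_zero, sub_zero, mul_zero, zero_div,
    Complex.exp_zero] at hsecond
  rw [eq_div_iff (one_sub_four_mul_sq_ne_zero n), sub_eq_iff_eq_add.mp hsecond]
  field_simp
  ring

lemma fourierCoeffOn_cos (n : ℤ) :
    fourierCoeffOn pi_pos (fun x => (Real.cos x : ℂ)) n = 4 * I * n / (π * (1 - 4 * n ^ 2)) := by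
  rw [fourierCoeffOn_of_deriv_deriv_eq_sub (f' := fun x => -Real.sin x) (h := fun _ => 0)
    Real.hasDerivAt_cos (fun x => by simpa using (Real.hasDerivAt_sin x).fun_neg) continuous_const]
  have hzero : fourierCoeffOn pi_pos (fun _ => ((0 : ℝ) : ℂ)) n = 0 := by
    simp [fourierCoeffOn_eq_integral]
  rw [hzero, Real.cos_pi, Real.cos_zero, Real.sin_pi, Real.sin_zero]
  push_cast
  field_simp
  ring

lemma fourierCoeffOn_pi_sub_two_mul_mul_sin (n : ℤ) :
    fourierCoeffOn pi_pos (fun x => (((π - 2 * x) * Real.sin x : ℝ) : ℂ)) n =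
      -(16 * I * n) / (π * (1 - 4 * n ^ 2) ^ 2) := by
  rw [fourierCoeffOn_of_deriv_deriv_eq_sub
    (f' := fun x => -2 * Real.sin x + (π - 2 * x) * Real.cos x) (h := fun x => -4 * Real.cos x)
    (fun x => (hasDerivAt_pi_sub_two_mul x).fun_mul (Real.hasDerivAt_sin x))
    (fun x => ?_) (by fun_prop)]
  · simp only [ofReal_mul, fourierCoeffOn.const_mul, fourierCoeffOn_cos, Real.cos_pi, Real.cos_zero,
      Real.sin_pi, Real.sin_zero]
    push_cast
    have := one_sub_four_mul_sq_ne_zero n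
    field_simp
    ring
  · refine (((Real.hasDerivAt_sin x).const_mul (-2)).fun_add
      ((hasDerivAt_pi_sub_two_mul x).fun_mul (Real.hasDerivAt_cos x))).congr_deriv ?_
    ring

lemma fourierCoeffOn_phiClosed (n : ℤ) :
    fourierCoeffOn pi_pos (fun x => (phiClosed x : ℂ)) n =
      4 * I * n * (13 - 4 * n ^ 2) / (π * (1 - 4 * n ^ 2) ^ 3) := by
  rw [fourierCoeffOn_of_deriv_deriv_eq_sub hasDerivAt_phiClosed hasDerivAt_phiClosedDeriv
    (by fun_prop)]
  simp only [ofReal_sub]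
  rw [fourierCoeffOn_sub pi_pos (Continuous.intervalIntegrable (by fun_prop) _ _)
    (Continuous.intervalIntegrable (by fun_prop) _ _)]
  simp only [ofReal_mul 3, fourierCoeffOn.const_mul, fourierCoeffOn_cos,
    fourierCoeffOn_pi_sub_two_mul_mul_sin, phiClosed, phiClosedDeriv, Real.cos_pi, Real.cos_zero,
    Real.sin_pi, Real.sin_zero]
  push_cast
  have := one_sub_four_mul_sq_ne_zero n
  field_simp
  ring

lemma hasSum_fourier_phiClosed {x : ℝ} (hx : x ∈ Icc 0 π) :
    HasSum (fun n : ℤ => fourierCoeffOn pi_pos (fun x => (phiClosed x : ℂ)) n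
      • fourier n (x : AddCircle (π - 0))) (phiClosed x : ℂ) := by
  have hcont : Continuous phiClosed := by unfold phiClosed; fun_prop
  have hends : (phiClosed 0 : ℂ) = phiClosed π := by simp [phiClosed]
  have hends' : (phiClosedDeriv 0 : ℂ) = phiClosedDeriv π := by
    norm_cast
    simp only [phiClosedDeriv, Real.cos_zero, Real.sin_zero, Real.cos_pi, Real.sin_pi]
    ring
  have hsum : Summable (fourierCoeffOn pi_pos (fun y => (phiClosed y : ℂ))) :=
    summable_fourierCoeffOn_of_hasDerivAt pi_pos (fun y _ => (hasDerivAt_phiClosed y).ofReal_comp)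
      (fun y _ => (hasDerivAt_phiClosedDeriv y).ofReal_comp)
      (Continuous.intervalIntegrable (by fun_prop) _ _) hends hends'
  exact hasSum_fourierCoeffOn pi_pos (f := fun y => (phiClosed y : ℂ)) (by fun_prop) hends hsum hx

lemma Phi10_eqOn_phiClosed : EqOn Phi10 phiClosed (Icc 0 π) := by
  intro x hx
  have hodd (n : ℤ) : fourierCoeffOn pi_pos (fun x => (phiClosed x : ℂ)) (-n)
      = -fourierCoeffOn pi_pos (fun x => (phiClosed x : ℂ)) n := by
    simp only [fourierCoeffOn_phiClosed]
    push_cast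
    ring
  have hterm (k : ℕ) : 2 * I * fourierCoeffOn pi_pos (fun x => (phiClosed x : ℂ)) (k + 1)
        * Complex.sin (2 * π * (k + 1) * x / (π - 0 : ℝ))
      = ((4 / π * (phiCoeff (k + 1) * Real.sin (2 * ((k : ℝ) + 1) * x)) : ℝ) : ℂ) := by
    have hπ : (π : ℂ) ≠ 0 := by exact_mod_cast pi_ne_zero
    have harg : (2 * π * (k + 1) * x / (π - 0 : ℝ) : ℂ) = 2 * (k + 1) * x := by
      rw [sub_zero]
      field_simp
    have hden : (1 - 4 * (k + 1) ^ 2 : ℂ) ≠ 0 := by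
      simpa using one_sub_four_mul_sq_ne_zero (k + 1)
    rw [harg, fourierCoeffOn_phiClosed, phiCoeff]
    push_cast
    field_simp
    rw [I_sq]
    ring
  have hsum := hasSum_sin_of_odd hodd (hasSum_fourier_phiClosed hx)
  simp only [hterm] at hsum
  rw [Phi10, ← tsum_mul_left, (Complex.hasSum_ofReal.mp hsum).tsum_eq]

lemma deriv_Phi10 {x : ℝ} (hx : x ∈ Ioo 0 π) : deriv Phi10 x = phiClosedDeriv x := by
  have hev : Phi10 =ᶠ[nhds x] phiClosed :=
    Phi10_eqOn_phiClosed.eventuallyEq_of_mem (Icc_mem_nhds hx.1 hx.2)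
  rw [hev.deriv_eq, (hasDerivAt_phiClosed x).deriv]

end ClosedForm

section Integral

/-- The integrand of `Λ₂₀` with `Φ₁₀` and its derivative replaced by their closed forms. -/
def closedIntegrand (x : ℝ) : ℝ :=
  (phiClosedDeriv x - (π / 2 - x) * cos x - 3 * (π - 2 * x) * phiClosed x
    + 3 / 4 * (π ^ 2 - 12 * π * x + 12 * x ^ 2) * sin x) * sin x

lemma closedIntegrand_eq (x : ℝ) :
    closedIntegrand x = (2 + 15 / 4 * (π ^ 2 - 6 * π * x + 6 * x ^ 2)) * sin x ^ 2
      - 9 / 2 * (x * (π - x) * (π - 2 * x)) * (sin x * cos x) := by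
  rw [closedIntegrand, phiClosedDeriv, phiClosed]
  ring

-- With `P = x (π - x) (π - 2x)` the integrand is `(2 + (15/4) P') sin² - (9/2) P sin cos`; the
-- primitive comes from integrating by parts until the cubic `P` is used up.
lemma hasDerivAt_primitive_closedIntegrand (x : ℝ) :
    HasDerivAt (fun y : ℝ => 3 * (y * (π - y) * (π - 2 * y)) - 8 * y
      + (8 - 3 * (π ^ 2 - 6 * π * y + 6 * y ^ 2)) * (sin y * cos y)
      + (3 / 2 * (12 * y - 6 * π) - 9 / 4 * (y * (π - y) * (π - 2 * y))) * sin y ^ 2)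
      (closedIntegrand x) x := by
  have hP : HasDerivAt (fun y : ℝ => y * (π - y) * (π - 2 * y)) (π ^ 2 - 6 * π * x + 6 * x ^ 2) x :=
    (((hasDerivAt_id' x).fun_mul ((hasDerivAt_id' x).const_sub π)).fun_mul
      (hasDerivAt_pi_sub_two_mul x)).congr_deriv (by ring)
  have hP' : HasDerivAt (fun y : ℝ => π ^ 2 - 6 * π * y + 6 * y ^ 2) (12 * x - 6 * π) x :=
    ((((hasDerivAt_id' x).const_mul (6 * π)).const_sub (π ^ 2)).fun_add
      (((hasDerivAt_id' x).fun_pow 2).const_mul 6)).congr_deriv (by norm_num; ring)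
  have hP'' : HasDerivAt (fun y : ℝ => 12 * y - 6 * π) 12 x := by
    simpa using ((hasDerivAt_id' x).const_mul 12).sub_const (6 * π)
  have hsc : HasDerivAt (fun y => sin y * cos y) (cos x ^ 2 - sin x ^ 2) x :=
    ((hasDerivAt_sin x).fun_mul (hasDerivAt_cos x)).congr_deriv (by ring)
  have hss : HasDerivAt (fun y => sin y ^ 2) (2 * (sin x * cos x)) x :=
    ((hasDerivAt_sin x).fun_pow 2).congr_deriv (by norm_num; ring)
  refine ((((hP.const_mul 3).fun_sub ((hasDerivAt_id' x).const_mul 8)).fun_add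
    (((hP'.const_mul 3).const_sub 8).fun_mul hsc)).fun_add
    (((hP''.const_mul (3 / 2)).fun_sub (hP.const_mul (9 / 4))).fun_mul hss)).congr_deriv ?_
  rw [closedIntegrand_eq, cos_sq']
  ring

lemma integral_closedIntegrand : ∫ x in (0 : ℝ)..π, closedIntegrand x = -8 * π := by
  rw [intervalIntegral.integral_eq_sub_of_hasDerivAt
    (fun x _ => hasDerivAt_primitive_closedIntegrand x)]
  · simp only [sin_pi, sin_zero]
    ring
  · apply Continuous.intervalIntegrable
    unfold closedIntegrand phiClosed phiClosedDeriv
    fun_prop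

end Integral

/-- The second-order Taylor coefficient `Λ₂₀` of the Dirichlet
eigenvalue branch equals `−16`. -/
theorem Lambda20_eq_neg_sixteen :
    (2/π) * ∫ x in (0:ℝ)..π,
        (deriv Phi10 x - (π/2 - x) * Real.cos x - 3 * (π - 2*x) * Phi10 x
          + (3/4) * (π^2 - 12*π*x + 12*x^2) * Real.sin x) * Real.sin x = -16 := by
  have hclosed : ∫ x in (0:ℝ)..π,
        (deriv Phi10 x - (π/2 - x) * Real.cos x - 3 * (π - 2*x) * Phi10 x
          + (3/4) * (π^2 - 12*π*x + 12*x^2) * Real.sin x) * Real.sin x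
      = ∫ x in (0:ℝ)..π, closedIntegrand x := by
    refine intervalIntegral.integral_congr_Ioo_of_le pi_pos.le fun x hx => ?_
    rw [deriv_Phi10 hx, Phi10_eqOn_phiClosed (Ioo_subset_Icc_self hx), closedIntegrand]
  rw [hclosed, integral_closedIntegrand]
  field_simp
  norm_num

end
end

section
/- Let Ψ₁₀ : [0,π] → ℝ be defined by Ψ₁₀(x) := −(16/π) Σ_{j=0}^∞ cos((2j+1)x)/((2j+1)² − 4)². Then (2/π) ∫₀^π ( Ψ₁₀'(x) + (π − 2x) sin(2x) ) cos(2x) dx = 3/4. -/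
/-!
On `[0, π]` one has `Ψ₁₀'(x) = (π/2 - x) sin (2x)`, so the integrand is
`(3/2) (π - 2x) sin (2x) cos (2x)`. To sum the sine series of `Ψ₁₀'`, split its coefficients as
`n / (n² - 4)² = (1 / (n - 2)² - 1 / (n + 2)²) / 8`. Summing over all odd integers `n`, positive and
negative, and shifting the index by `±2`, one gets
`∑ (sin ((m + 2) x) - sin ((m - 2) x)) / m² = 2 sin (2x) ∑ cos (m x) / m²`,
where the last sum is the Fourier series of a triangle wave.
-/

open Set Real

noncomputable section

-- The reflection `j ↦ -(j + 1)` is `n ↦ -n` on the odd integers `n = 2 j + 1`.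
theorem hasSum_int_two_nsmul_iff_of_reflect {E : Type*} [AddCommGroup E] [UniformSpace E]
    [IsUniformAddGroup E] [CompleteSpace E] [T2Space E] [IsAddTorsionFree E] {f : ℤ → E}
    (hf : ∀ j, f (-(j + 1)) = f j) {a : E} :
    HasSum f (2 • a) ↔ HasSum (fun j : ℕ => f j) a := by
  have int_of_nat {b : E} (h : HasSum (fun j : ℕ => f j) b) : HasSum f (2 • b) := by
    rw [two_nsmul]
    exact h.of_nat_of_neg_add_one (by simpa only [hf] using h)
  refine ⟨fun h => ?_, int_of_nat⟩
  have hnat := (h.summable.comp_injective Nat.cast_injective).hasSum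
  have heq := nsmul_right_injective two_ne_zero ((int_of_nat hnat).unique h)
  exact heq ▸ hnat

theorem hasSum_cos_nat_mul_div_sq {x : ℝ} (hx : x ∈ Icc 0 (2 * π)) :
    HasSum (fun n : ℕ => cos (n * x) / (n : ℝ) ^ 2) (x ^ 2 / 4 - π * x / 2 + π ^ 2 / 6) := by
  have hy : x / (2 * π) ∈ Icc (0 : ℝ) 1 :=
    ⟨div_nonneg hx.1 two_pi_pos.le, div_le_one_of_le₀ hx.2 two_pi_pos.le⟩
  have h := hasSum_one_div_nat_pow_mul_cos one_ne_zero hy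
  rw [mul_one, ← bernoulliFun, bernoulliFun_two] at h
  convert! h using 1
  · ext n
    rw [show 2 * π * n * (x / (2 * π)) = n * x by field_simp]
    ring
  · rw [Nat.factorial_two]
    push_cast
    field_simp
    ring

theorem hasSum_cos_odd_mul_div_sq {x : ℝ} (hx : x ∈ Icc 0 π) :
    HasSum (fun j : ℕ => cos ((2 * j + 1) * x) / (2 * (j : ℝ) + 1) ^ 2)
      (π * (π - 2 * x) / 8) := by
  have hall := hasSum_cos_nat_mul_div_sq (x := x) ⟨hx.1, by linarith [hx.2, pi_pos]⟩
  have heven : HasSum (fun j : ℕ => cos ((2 * j : ℕ) * x) / ((2 * j : ℕ) : ℝ) ^ 2)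
      (((2 * x) ^ 2 / 4 - π * (2 * x) / 2 + π ^ 2 / 6) / 4) := by
    convert! (hasSum_cos_nat_mul_div_sq (x := 2 * x)
      ⟨by linarith [hx.1], by linarith [hx.2]⟩).div_const 4 using 1
    ext j
    push_cast
    rw [show 2 * (j : ℝ) * x = j * (2 * x) by ring]
    ring
  have hodd := (hall.summable.comp_injective
    (i := fun j : ℕ => 2 * j + 1) (fun _ _ h => by simpa using h)).hasSum
  have hsplit := (heven.even_add_odd (f := fun n : ℕ => cos (n * x) / (n : ℝ) ^ 2) hodd).unique hall
  convert! hodd using 1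
  · ext j
    simp
  · linarith

theorem hasSum_int_cos_odd_mul_div_sq {x : ℝ} (hx : x ∈ Icc 0 π) :
    HasSum (fun j : ℤ => cos ((2 * j + 1) * x) / (2 * (j : ℝ) + 1) ^ 2)
      (π * (π - 2 * x) / 4) := by
  rw [show π * (π - 2 * x) / 4 = 2 • (π * (π - 2 * x) / 8) by ring,
    hasSum_int_two_nsmul_iff_of_reflect]
  · simpa only [Int.cast_natCast] using hasSum_cos_odd_mul_div_sq hx
  · intro j
    push_cast
    rw [show 2 * (-((j : ℝ) + 1)) + 1 = -(2 * j + 1) by ring, neg_mul, cos_neg, neg_sq]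

theorem summable_int_one_div_odd_sq : Summable fun j : ℤ => 1 / (2 * (j : ℝ) + 1) ^ 2 := by
  simpa using (hasSum_int_cos_odd_mul_div_sq ⟨le_rfl, pi_pos.le⟩).summable

theorem div_sq_sub_sq_sq {K : Type*} [Field K] [CharZero K] {n a : K} (ha : a ≠ 0)
    (hsub : n - a ≠ 0) (hadd : n + a ≠ 0) :
    n / (n ^ 2 - a ^ 2) ^ 2 = (1 / (n - a) ^ 2 - 1 / (n + a) ^ 2) / (4 * a) := by
  rw [sq_sub_sq]
  field_simp
  ring

theorem odd_div_sq_sub_even_sq_sq {k : ℤ} (hk : k ≠ 0) (j : ℤ) :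
    (2 * (j : ℝ) + 1) / ((2 * (j : ℝ) + 1) ^ 2 - (2 * k) ^ 2) ^ 2 =
      (1 / (2 * ((j - k : ℤ) : ℝ) + 1) ^ 2 - 1 / (2 * ((j + k : ℤ) : ℝ) + 1) ^ 2) / (8 * k) := by
  have hsub : 2 * (j : ℝ) + 1 - 2 * k ≠ 0 := by
    norm_cast
    lia
  have hadd : 2 * (j : ℝ) + 1 + 2 * k ≠ 0 := by
    norm_cast
    lia
  rw [div_sq_sub_sq_sq (mul_ne_zero two_ne_zero (Int.cast_ne_zero.mpr hk)) hsub hadd]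
  push_cast
  ring

theorem summable_odd_div_sq_sub_even_sq_sq {k : ℤ} (hk : k ≠ 0) :
    Summable fun j : ℕ => (2 * (j : ℝ) + 1) / ((2 * (j : ℝ) + 1) ^ 2 - (2 * k) ^ 2) ^ 2 := by
  have hsub := (Equiv.subRight k).summable_iff.mpr summable_int_one_div_odd_sq
  have hadd := (Equiv.addRight k).summable_iff.mpr summable_int_one_div_odd_sq
  have hint := (hsub.sub hadd).div_const (8 * (k : ℝ))
  refine (hint.comp_injective Nat.cast_injective).congr fun j => ?_
  simpa using (odd_div_sq_sub_even_sq_sq hk j).symm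

theorem hasSum_int_odd_mul_sin_div_sq_sub_even_sq_sq {k : ℤ} (hk : k ≠ 0) {x : ℝ}
    (hx : x ∈ Icc 0 π) :
    HasSum (fun j : ℤ => (2 * (j : ℝ) + 1) / ((2 * (j : ℝ) + 1) ^ 2 - (2 * k) ^ 2) ^ 2 *
      sin ((2 * j + 1) * x)) (π * (π - 2 * x) * sin (2 * k * x) / (16 * k)) := by
  have hsin : Summable fun j : ℤ => sin ((2 * j + 1) * x) / (2 * (j : ℝ) + 1) ^ 2 := by
    refine summable_int_one_div_odd_sq.of_norm_bounded fun j => ?_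
    rw [norm_div, norm_of_nonneg (sq_nonneg _)]
    gcongr
    exact abs_sin_le_one _
  have hshift (l : ℤ) : HasSum
      (fun j : ℤ => sin ((2 * (j + l : ℤ) + 1) * x) / (2 * (j : ℝ) + 1) ^ 2)
      ((∑' j : ℤ, sin ((2 * j + 1) * x) / (2 * (j : ℝ) + 1) ^ 2) * cos (2 * l * x) +
        π * (π - 2 * x) / 4 * sin (2 * l * x)) := by
    convert! (hsin.hasSum.mul_right (cos (2 * l * x))).add
      ((hasSum_int_cos_odd_mul_div_sq hx).mul_right (sin (2 * l * x))) using 1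
    ext j
    push_cast
    rw [show (2 * ((j : ℝ) + l) + 1) * x = (2 * j + 1) * x + 2 * l * x by ring, sin_add]
    ring
  have hplus := (Equiv.subRight k).hasSum_iff.mpr (hshift k)
  have hminus := (Equiv.addRight k).hasSum_iff.mpr (hshift (-k))
  convert! (hplus.sub hminus).div_const (8 * (k : ℝ)) using 1
  · ext j
    rw [odd_div_sq_sub_even_sq_sq hk]
    simp only [Function.comp_apply, Equiv.subRight_apply, Equiv.coe_addRight, sub_add_cancel,
      add_neg_cancel_right]
    ring
  · push_cast
    simp only [mul_neg, neg_mul, cos_neg, sin_neg]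
    ring

theorem hasSum_odd_mul_sin_div_sq_sub_even_sq_sq {k : ℤ} (hk : k ≠ 0) {x : ℝ}
    (hx : x ∈ Icc 0 π) :
    HasSum (fun j : ℕ => (2 * (j : ℝ) + 1) / ((2 * (j : ℝ) + 1) ^ 2 - (2 * k) ^ 2) ^ 2 *
      sin ((2 * j + 1) * x)) (π * (π - 2 * x) * sin (2 * k * x) / (32 * k)) := by
  have h := hasSum_int_odd_mul_sin_div_sq_sub_even_sq_sq hk hx
  rw [show π * (π - 2 * x) * sin (2 * k * x) / (16 * k) =
      2 • (π * (π - 2 * x) * sin (2 * k * x) / (32 * k)) by ring,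
    hasSum_int_two_nsmul_iff_of_reflect] at h
  · simpa only [Int.cast_natCast] using h
  · intro j
    push_cast
    rw [show 2 * (-((j : ℝ) + 1)) + 1 = -(2 * j + 1) by ring, neg_mul, sin_neg, neg_sq]
    ring

theorem hasDerivAt_tsum_mul_cos {ι : Type*} {a ω : ι → ℝ} (h : Summable fun i => |a i * ω i|)
    {y : ℝ} (hy : Summable fun i => a i * cos (ω i * y)) (x : ℝ) :
    HasDerivAt (fun x => ∑' i, a i * cos (ω i * x)) (-∑' i, a i * ω i * sin (ω i * x)) x := by
  rw [← tsum_neg]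
  refine hasDerivAt_tsum (g := fun i x => a i * cos (ω i * x))
    (g' := fun i x => -(a i * ω i * sin (ω i * x))) h (fun i z => ?_) (fun i z => ?_) hy x
  · convert! ((hasDerivAt_const_mul (ω i)).cos (x := z)).const_mul (a i) using 1
    ring
  · rw [norm_neg, norm_mul, Real.norm_eq_abs, Real.norm_eq_abs]
    exact mul_le_of_le_one_right (abs_nonneg _) (abs_sin_le_one _)

theorem hasDerivAt_Psi10 {x : ℝ} (hx : x ∈ Icc 0 π) :
    HasDerivAt Psi10 ((π / 2 - x) * sin (2 * x)) x := by
  have hcoeff : Summable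
      fun j : ℕ => |1 / ((2 * (j : ℝ) + 1) ^ 2 - 4) ^ 2 * (2 * (j : ℝ) + 1)| := by
    refine (summable_odd_div_sq_sub_even_sq_sq one_ne_zero).congr fun j => ?_
    rw [abs_of_nonneg (by positivity), Int.cast_one]
    ring
  have hzero : ∀ j : ℕ, cos ((2 * j + 1) * (π / 2)) = 0 := fun j =>
    cos_eq_zero_iff.mpr ⟨j, by push_cast; ring⟩
  have hsum : HasSum
      (fun j : ℕ => 1 / ((2 * (j : ℝ) + 1) ^ 2 - 4) ^ 2 * (2 * (j : ℝ) + 1) *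
        sin ((2 * j + 1) * x)) (π * (π - 2 * x) * sin (2 * x) / 32) := by
    convert! hasSum_odd_mul_sin_div_sq_sub_even_sq_sq one_ne_zero hx using 1
    · ext j
      rw [Int.cast_one]
      ring
    · simp only [Int.cast_one, mul_one]
  have hderiv := hasDerivAt_tsum_mul_cos hcoeff (y := π / 2)
    (by simpa only [hzero, mul_zero] using summable_zero) x
  rw [hsum.tsum_eq] at hderiv
  convert! hderiv.const_mul (-(16 / π)) using 1
  · ext y
    simp only [Psi10, div_eq_inv_mul, mul_one]
  · field_simp
    ring

theorem integral_pi_sub_two_mul_mul_sin_mul_cos {k : ℤ} (hk : k ≠ 0) :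
    ∫ x in (0 : ℝ)..π, (π - 2 * x) * sin (k * x) * cos (k * x) = π / (2 * k) := by
  have hk' : (k : ℝ) ≠ 0 := Int.cast_ne_zero.mpr hk
  have hderiv (x : ℝ) : HasDerivAt
      (fun x => -(π - 2 * x) * cos (2 * k * x) / (4 * k) - sin (2 * k * x) / (4 * k ^ 2))
      ((π - 2 * x) * sin (k * x) * cos (k * x)) x := by
    have hlin : HasDerivAt (fun x : ℝ => -(π - 2 * x)) 2 x := by
      convert! ((hasDerivAt_const_mul (2 : ℝ)).const_sub π).neg using 1
      rw [neg_neg]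
    have harg : HasDerivAt (fun x : ℝ => 2 * k * x) (2 * k) x := hasDerivAt_const_mul _
    convert! ((hlin.mul harg.cos).div_const (4 * k)).sub (harg.sin.div_const (4 * k ^ 2)) using 1
    rw [show 2 * k * x = 2 * (k * x) by ring, sin_two_mul]
    field_simp
    ring
  rw [intervalIntegral.integral_eq_sub_of_hasDerivAt (fun x _ => hderiv x)
    (Continuous.intervalIntegrable (by fun_prop) _ _)]
  have hcos : cos (2 * k * π) = 1 := by
    rw [← cos_int_mul_two_pi k]
    ring_nf
  have hsin : sin (2 * k * π) = 0 := by exact_mod_cast sin_int_mul_pi (2 * k)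
  simp only [hcos, hsin, mul_zero, cos_zero, sin_zero]
  field_simp
  ring

/-- The second-order Taylor coefficient `ν̃₂₀` of the Neumann
eigenvalue branch equals `3/4`. -/
theorem nu20_eq_three_quarters :
    (2/π) * ∫ x in (0:ℝ)..π,
        (deriv Psi10 x + (π - 2*x) * Real.sin (2*x)) * Real.cos (2*x) = 3/4 := by
  have hclosed : EqOn
      (fun x => (deriv Psi10 x + (π - 2 * x) * sin (2 * x)) * cos (2 * x))
      (fun x => 3 / 2 * ((π - 2 * x) * sin (2 * x) * cos (2 * x))) (uIcc 0 π) := by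
    intro x hx
    rw [uIcc_of_le pi_pos.le] at hx
    simp only [(hasDerivAt_Psi10 hx).deriv]
    ring
  have hintegral : ∫ x in (0 : ℝ)..π, (π - 2 * x) * sin (2 * x) * cos (2 * x) = π / 4 := by
    have h := integral_pi_sub_two_mul_mul_sin_mul_cos (k := 2) two_ne_zero
    rw [Int.cast_ofNat] at h
    rw [h]
    ring
  rw [intervalIntegral.integral_congr hclosed, intervalIntegral.integral_const_mul, hintegral]
  field_simp

end
end

section
/- Fix integers l ≥ 1 and k ≥ 0. Suppose (a_j) is a sequence in (0,1) with a_j → 0, and for each j suppose μ_j ∈ ℝ is such that the Dirichlet problem φ''(r) + φ'(r)/r − l²φ(r)/r² + μ_j φ(r) = 0 on (a_j,1), φ(a_j) = φ(1) = 0, has a not-identically-zero C² solution with exactly k zeros in (a_j,1). Suppose also μ⁰ ∈ ℝ is such that the equation φ''(r) + φ'(r)/r − l²φ(r)/r² + μ⁰φ(r) = 0 on (0,1) has a not-identically-zero solution φ which extends continuously to [0,1] with φ(0) = φ(1) = 0, satisfies ∫₀¹ (φ'(r)² + φ(r)²/r²) r dr < ∞, and has exactly k zeros in (0,1). Then μ_j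 → μ⁰ as j → ∞. (That is, the l-mode Dirichlet eigenvalues λ_{l,k}(a) of the annulus {a < |x| < 1} converge, as a → 0, to the l-mode Dirichlet eigenvalues of the unit disk.) -/
open Set Real Filter MeasureTheory

/-!
Equal numbers of nodes and Sturm comparison decide both inequalities. If `μ_j < μ⁰`, the disk mode
has a zero between any two consecutive zeros of the annular mode on `[a_j, 1]`, hence at least
`k + 1` zeros; so `μ⁰ ≤ μ_j`. If `μ_j ≥ μ⁰ + ε`, the annular mode has a zero between any two
consecutive zeros of the disk mode, and the only interval that ordinary comparison does not cover is
`(a_j, z)` with `z` the first positive zero of the disk mode `u`, as `u (a_j)` need not vanish.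
Suppose `u` and the annular mode `v` are positive on it, and fix `m ∈ (0, z)`. Then
`r (v u' - u v')` is nonpositive, and the gap `ε` forces `(v / u)' ≥ C (v / u)(m) / r` on `(a_j, m)`
with `C > 0` independent of `j`. Since `v (a_j) = 0` and `∫ dr / r` diverges at `0`, this is
impossible once `a_j` is small.
-/

open scoped Topology

theorem encard_add_one_le_encard_of_interlaced {α : Type*} [LinearOrder α] {a b : α}
    {S T : Set α} (hab : a < b) (hS : S.Finite) (hSab : S ⊆ Ioo a b)
    (h : ∀ x ∈ insert a S, ∀ y ∈ insert b S, x < y → Disjoint S (Ioo x y) →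
      (T ∩ Ioo x y).Nonempty) :
    S.encard + 1 ≤ T.encard := by
  rcases T.finite_or_infinite with hT | hT
  swap
  · simp [hT.encard_eq]
  lift S to Finset α using hS
  lift T to Finset α using hT
  have ha : a ∉ insert b S := by
    rw [Finset.mem_insert, not_or]
    exact ⟨hab.ne, fun haS => (hSab haS).1.false⟩
  have hb : b ∉ S := fun hbS => (hSab hbS).2.false
  have hmem : ∀ x ∈ insert a (insert b S), x = a ∨ x = b ∨ x ∈ S := fun x hx => by
    simpa only [Finset.mem_insert] using hx
  have hIcc : ∀ x ∈ insert a (insert b S), a ≤ x ∧ x ≤ b := by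
    intro x hx
    rcases hmem x hx with rfl | rfl | hxS
    · exact ⟨le_rfl, hab.le⟩
    · exact ⟨hab.le, le_rfl⟩
    · exact ⟨(hSab hxS).1.le, (hSab hxS).2.le⟩
  have hcard : (insert a (insert b S)).card ≤ T.card + 1 := by
    refine Finset.card_le_of_interleaved fun x hx y hy hxy hgap => ?_
    have hxS : x ∈ insert a (S : Set α) :=
      (hmem x hx).imp_right fun hx' => hx'.resolve_left (hxy.trans_le (hIcc y hy).2).ne
    have hyS : y ∈ insert b (S : Set α) :=
      (hmem y hy).resolve_left ((hIcc x hx).1.trans_lt hxy).ne'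
    have hdisj : Disjoint (S : Set α) (Ioo x y) := Set.disjoint_left.2 fun z hz =>
      hgap z (Finset.mem_insert_of_mem (Finset.mem_insert_of_mem hz))
    obtain ⟨z, hzT, hz⟩ := h x hxS y hyS hxy hdisj
    exact ⟨z, hzT, hz⟩
  rw [Finset.card_insert_of_notMem ha, Finset.card_insert_of_notMem hb] at hcard
  rw [encard_coe_eq_coe_finsetCard, encard_coe_eq_coe_finsetCard]
  exact_mod_cast (by lia : S.card + 1 ≤ T.card)

theorem exists_forall_mul_pos_of_isPreconnected {X : Type*} [TopologicalSpace X] {s : Set X}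
    {f : X → ℝ} (hs : IsPreconnected s) (hf : ContinuousOn f s) (h0 : ∀ x ∈ s, f x ≠ 0) :
    ∃ σ : ℝ, ∀ x ∈ s, 0 < σ * f x := by
  rcases s.eq_empty_or_nonempty with rfl | ⟨y, hy⟩
  · exact ⟨0, fun x hx => hx.elim⟩
  refine ⟨f y, fun x hx => ?_⟩
  by_contra! hle
  have hzero : (0 : ℝ) ∈ uIcc (f y) (f x) := by
    rw [mem_uIcc, and_comm (a := f x ≤ 0)]
    exact (mul_nonpos_iff.1 hle).symm
  obtain ⟨z, hz, hz0⟩ := (hs.image f hf).ordConnected.uIcc_subset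
    (mem_image_of_mem f hy) (mem_image_of_mem f hx) hzero
  exact h0 z hz hz0

/-- `u` solves `(p u')' = Q u` on `(a, b)`, written as a first-order system for `u` and its flux
`U = p u'`, so that `p` need not be differentiable. Nothing is required at the end points. -/
structure IsSturmLiouvilleSolution (p Q : ℝ → ℝ) (a b : ℝ) (u U : ℝ → ℝ) : Prop where
  hasDerivAt : ∀ x ∈ Ioo a b, HasDerivAt u (U x / p x) x
  hasDerivAt_flux : ∀ x ∈ Ioo a b, HasDerivAt U (Q x * u x) x

/-- The Wronskian `p (v u' - u v')` of `u` and `v`, expressed through the fluxes `U = p u'` and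
`V = p v'`. -/
def fluxWronskian (u U v V : ℝ → ℝ) (x : ℝ) : ℝ := v x * U x - u x * V x

namespace IsSturmLiouvilleSolution

variable {p Q Qu Qv u U v V : ℝ → ℝ} {a b : ℝ}

theorem mono {a' b' : ℝ} (h : IsSturmLiouvilleSolution p Q a b u U) (ha : a ≤ a') (hb : b' ≤ b) :
    IsSturmLiouvilleSolution p Q a' b' u U where
  hasDerivAt x hx := h.hasDerivAt x (Ioo_subset_Ioo ha hb hx)
  hasDerivAt_flux x hx := h.hasDerivAt_flux x (Ioo_subset_Ioo ha hb hx)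

theorem const_mul (h : IsSturmLiouvilleSolution p Q a b u U) (σ : ℝ) :
    IsSturmLiouvilleSolution p Q a b (fun x => σ * u x) (fun x => σ * U x) where
  hasDerivAt x hx := ((h.hasDerivAt x hx).const_mul σ).congr_deriv (by ring)
  hasDerivAt_flux x hx := ((h.hasDerivAt_flux x hx).const_mul σ).congr_deriv (by ring)

theorem comp_neg (h : IsSturmLiouvilleSolution p Q a b u U) :
    IsSturmLiouvilleSolution (fun x => p (-x)) (fun x => Q (-x)) (-b) (-a)
      (fun x => u (-x)) (fun x => -U (-x)) where
  hasDerivAt x hx :=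
    ((h.hasDerivAt (-x) (neg_mem_Ioo_iff.2 hx)).comp x (hasDerivAt_neg x)).congr_deriv (by ring)
  hasDerivAt_flux x hx :=
    ((h.hasDerivAt_flux (-x) (neg_mem_Ioo_iff.2 hx)).comp x (hasDerivAt_neg x)).neg.congr_deriv
      (by ring)

theorem continuousOn (h : IsSturmLiouvilleSolution p Q a b u U) : ContinuousOn u (Ioo a b) :=
  fun x hx => (h.hasDerivAt x hx).continuousAt.continuousWithinAt

theorem exists_abs_flux_le (h : IsSturmLiouvilleSolution p Q a b u U)
    (hQ : ContinuousOn Q (Icc a b)) (hu : ContinuousOn u (Icc a b)) :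
    ∃ K, ∀ x ∈ Ioo a b, |U x| ≤ K := by
  obtain ⟨C, hC⟩ := isCompact_Icc.exists_bound_of_continuousOn (hQ.mul hu)
  have hLip : LipschitzOnWith C.toNNReal U (Ioo a b) :=
    (convex_Ioo a b).lipschitzOnWith_of_nnnorm_hasDerivWithin_le
      (fun x hx => (h.hasDerivAt_flux x hx).hasDerivWithinAt)
      fun x hx => NNReal.le_toNNReal_of_coe_le (hC x (Ioo_subset_Icc_self hx))
  obtain ⟨g, hg, hUg⟩ := hLip.extend_real
  obtain ⟨K, hK⟩ := (hg.isBounded_image (Metric.isBounded_Ioo a b)).exists_norm_le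
  exact ⟨K, fun x hx => hUg hx ▸ hK _ (mem_image_of_mem g hx)⟩

theorem frequently_flux_nonpos (h : IsSturmLiouvilleSolution p Q a b u U) (hab : a < b)
    (hp : ∀ x ∈ Ioo a b, 0 < p x) (hu : ∀ x ∈ Ioo a b, 0 < u x)
    (hub : Tendsto u (𝓝[<] b) (𝓝 0)) : ∃ᶠ x in 𝓝[<] b, U x ≤ 0 := by
  intro hU
  simp only [not_le] at hU
  obtain ⟨c, hc, hcU⟩ :=
    (mem_nhdsLT_iff_exists_Ioo_subset' hab).1 (hU.and (Ioo_mem_nhdsLT hab))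
  have hmono : MonotoneOn u (Ioo c b) := by
    refine monotoneOn_of_hasDerivWithinAt_nonneg (f' := fun x => U x / p x) (convex_Ioo c b)
      (h.continuousOn.mono fun x hx => (hcU hx).2) (fun x hx => ?_) fun x hx => ?_
    all_goals rw [interior_Ioo] at hx
    · exact (h.hasDerivAt x (hcU hx).2).hasDerivWithinAt
    · exact (div_pos (hcU hx).1 (hp x (hcU hx).2)).le
  obtain ⟨y, hy⟩ := exists_between (mem_Iio.1 hc)
  have hle : u y ≤ 0 := by
    refine ge_of_tendsto hub ?_
    filter_upwards [Ioo_mem_nhdsLT hy.2] with x hx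
    exact hmono hy ⟨hy.1.trans hx.1, hx.2⟩ hx.1.le
  exact (hu y (hcU hy).2).not_ge hle

theorem hasDerivAt_fluxWronskian (hu : IsSturmLiouvilleSolution p Qu a b u U)
    (hv : IsSturmLiouvilleSolution p Qv a b v V) {x : ℝ} (hx : x ∈ Ioo a b) :
    HasDerivAt (fluxWronskian u U v V) ((Qu x - Qv x) * u x * v x) x :=
  (((hv.hasDerivAt x hx).mul (hu.hasDerivAt_flux x hx)).sub
    ((hu.hasDerivAt x hx).mul (hv.hasDerivAt_flux x hx))).congr_deriv (by ring)

theorem hasDerivAt_div (hu : IsSturmLiouvilleSolution p Qu a b u U)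
    (hv : IsSturmLiouvilleSolution p Qv a b v V) {x : ℝ} (hx : x ∈ Ioo a b) (hpx : p x ≠ 0)
    (hux : u x ≠ 0) :
    HasDerivAt (fun x => v x / u x) (-fluxWronskian u U v V x / (p x * u x ^ 2)) x := by
  refine ((hv.hasDerivAt x hx).div (hu.hasDerivAt x hx) hux).congr_deriv ?_
  rw [fluxWronskian]
  field_simp
  ring

theorem monotoneOn_div (hu : IsSturmLiouvilleSolution p Qu a b u U)
    (hv : IsSturmLiouvilleSolution p Qv a b v V) (hupos : ∀ x ∈ Ioo a b, 0 < u x)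
    (hp : ∀ x ∈ Ioo a b, 0 < p x) (hW : ∀ x ∈ Ioo a b, fluxWronskian u U v V x ≤ 0) :
    MonotoneOn (fun x => v x / u x) (Ioo a b) := by
  have hderiv : ∀ x ∈ Ioo a b, HasDerivAt (fun x => v x / u x)
      (-fluxWronskian u U v V x / (p x * u x ^ 2)) x := fun x hx =>
    hu.hasDerivAt_div hv hx (hp x hx).ne' (hupos x hx).ne'
  refine monotoneOn_of_hasDerivWithinAt_nonneg
    (f' := fun x => -fluxWronskian u U v V x / (p x * u x ^ 2)) (convex_Ioo a b)
    (fun x hx => (hderiv x hx).continuousAt.continuousWithinAt) (fun x hx => ?_) fun x hx => ?_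
  all_goals rw [interior_Ioo] at hx
  · exact (hderiv x hx).hasDerivWithinAt
  · exact div_nonneg (neg_nonneg.2 (hW x hx)) (mul_nonneg (hp x hx).le (sq_nonneg _))

section Comparison

variable (hu : IsSturmLiouvilleSolution p Qu a b u U) (hv : IsSturmLiouvilleSolution p Qv a b v V)
  (hupos : ∀ x ∈ Ioo a b, 0 < u x) (hvpos : ∀ x ∈ Ioo a b, 0 < v x)

include hu hv hupos hvpos

theorem monotoneOn_fluxWronskian (hQ : ∀ x ∈ Ioo a b, Qv x ≤ Qu x) :
    MonotoneOn (fluxWronskian u U v V) (Ioo a b) := by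
  refine monotoneOn_of_hasDerivWithinAt_nonneg
    (f' := fun x => (Qu x - Qv x) * u x * v x) (convex_Ioo a b)
    (fun x hx => (hu.hasDerivAt_fluxWronskian hv hx).continuousAt.continuousWithinAt)
    (fun x hx => ?_) fun x hx => ?_
  all_goals rw [interior_Ioo] at hx
  · exact (hu.hasDerivAt_fluxWronskian hv hx).hasDerivWithinAt
  · exact mul_nonneg (mul_nonneg (sub_nonneg.2 (hQ x hx)) (hupos x hx).le) (hvpos x hx).le

theorem strictMonoOn_fluxWronskian (hQ : ∀ x ∈ Ioo a b, Qv x < Qu x) :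
    StrictMonoOn (fluxWronskian u U v V) (Ioo a b) := by
  refine strictMonoOn_of_hasDerivWithinAt_pos
    (f' := fun x => (Qu x - Qv x) * u x * v x) (convex_Ioo a b)
    (fun x hx => (hu.hasDerivAt_fluxWronskian hv hx).continuousAt.continuousWithinAt)
    (fun x hx => ?_) fun x hx => ?_
  all_goals rw [interior_Ioo] at hx
  · exact (hu.hasDerivAt_fluxWronskian hv hx).hasDerivWithinAt
  · exact mul_pos (mul_pos (sub_pos.2 (hQ x hx)) (hupos x hx)) (hvpos x hx)

theorem fluxWronskian_nonpos (hp : ∀ x ∈ Ioo a b, 0 < p x) (hQ : ∀ x ∈ Ioo a b, Qv x ≤ Qu x)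
    (hQv : ContinuousOn Qv (Icc a b)) (hvc : ContinuousOn v (Icc a b))
    (hub : Tendsto u (𝓝[<] b) (𝓝 0)) {x : ℝ} (hx : x ∈ Ioo a b) :
    fluxWronskian u U v V x ≤ 0 := by
  have hab : a < b := hx.1.trans hx.2
  by_contra! hW
  obtain ⟨K, hK⟩ := hv.exists_abs_flux_le hQv hvc
  have huV : Tendsto (fun y => u y * V y) (𝓝[<] b) (𝓝 0) :=
    hub.zero_mul_isBoundedUnder_le
      (isBoundedUnder_of_eventually_le (mem_of_superset (Ioo_mem_nhdsLT hab) hK))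
  have hsmall : ∀ᶠ y in 𝓝[<] b, -fluxWronskian u U v V x < u y * V y :=
    huV.eventually (lt_mem_nhds (neg_neg_of_pos hW))
  obtain ⟨y, hUy, hVy, hy⟩ := ((hu.frequently_flux_nonpos hab hp hupos hub).and_eventually
    (hsmall.and (Ioo_mem_nhdsLT hx.2))).exists
  have hyab : y ∈ Ioo a b := ⟨hx.1.trans hy.1, hy.2⟩
  have hWxy : fluxWronskian u U v V x ≤ v y * U y - u y * V y :=
    hu.monotoneOn_fluxWronskian hv hupos hvpos hQ hx hyab hy.1.le
  have hvU : v y * U y ≤ 0 := mul_nonpos_of_nonneg_of_nonpos (hvpos y hyab).le hUy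
  linarith

theorem fluxWronskian_nonneg (hp : ∀ x ∈ Ioo a b, 0 < p x) (hQ : ∀ x ∈ Ioo a b, Qv x ≤ Qu x)
    (hQv : ContinuousOn Qv (Icc a b)) (hvc : ContinuousOn v (Icc a b))
    (hua : Tendsto u (𝓝[>] a) (𝓝 0)) {x : ℝ} (hx : x ∈ Ioo a b) :
    0 ≤ fluxWronskian u U v V x := by
  have hIoo : ∀ y ∈ Ioo (-b) (-a), -y ∈ Ioo a b := fun y hy => neg_mem_Ioo_iff.2 hy
  have hIcc : MapsTo Neg.neg (Icc (-b) (-a)) (Icc a b) := fun y hy => neg_mem_Icc_iff.2 hy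
  have hreflect := hu.comp_neg.fluxWronskian_nonpos hv.comp_neg
    (fun y hy => hupos _ (hIoo y hy)) (fun y hy => hvpos _ (hIoo y hy))
    (fun y hy => hp _ (hIoo y hy)) (fun y hy => hQ _ (hIoo y hy))
    (hQv.comp continuousOn_neg hIcc) (hvc.comp continuousOn_neg hIcc)
    (hua.comp tendsto_neg_nhdsLT_neg) (neg_mem_Ioo_iff.2 (by simpa only [neg_neg] using hx))
  simp only [fluxWronskian, neg_neg] at hreflect ⊢
  linarith

theorem false_of_pos_of_tendsto_zero (hab : a < b) (hp : ∀ x ∈ Ioo a b, 0 < p x)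
    (hQ : ∀ x ∈ Ioo a b, Qv x < Qu x)
    (hQv : ContinuousOn Qv (Icc a b)) (hvc : ContinuousOn v (Icc a b))
    (hua : Tendsto u (𝓝[>] a) (𝓝 0)) (hub : Tendsto u (𝓝[<] b) (𝓝 0)) : False := by
  obtain ⟨x, hx⟩ := exists_between hab
  obtain ⟨y, hy⟩ := exists_between hx.2
  have hyab : y ∈ Ioo a b := ⟨hx.1.trans hy.1, hy.2⟩
  have hQ' : ∀ x ∈ Ioo a b, Qv x ≤ Qu x := fun x hx => (hQ x hx).le
  exact (calc
    0 ≤ fluxWronskian u U v V x := hu.fluxWronskian_nonneg hv hupos hvpos hp hQ' hQv hvc hua hx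
    _ < fluxWronskian u U v V y := hu.strictMonoOn_fluxWronskian hv hupos hvpos hQ hx hyab hy.1
    _ ≤ 0 := hu.fluxWronskian_nonpos hv hupos hvpos hp hQ' hQv hvc hub hyab).false

theorem fluxWronskian_le_of_gap (hp : ∀ x ∈ Ioo a b, 0 < p x)
    (hW : ∀ x ∈ Ioo a b, fluxWronskian u U v V x ≤ 0) {κ m n : ℝ} (hκ : 0 ≤ κ)
    (hm : m ∈ Ioo a b) (hn : n ∈ Ioo a b) (hmn : m ≤ n)
    (hgap : ∀ x ∈ Icc m n, κ ≤ (Qu x - Qv x) * u x ^ 2) :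
    fluxWronskian u U v V m ≤ -(κ * (n - m) * (v m / u m)) := by
  have hsub : Icc m n ⊆ Ioo a b := Icc_subset_Ioo hm.1 hn.2
  have hderiv : ∀ x ∈ Icc m n, HasDerivAt (fluxWronskian u U v V)
      ((Qu x - Qv x) * u x * v x) x := fun x hx => hu.hasDerivAt_fluxWronskian hv (hsub hx)
  have hderiv_ge : ∀ x ∈ Icc m n, κ * (v m / u m) ≤ (Qu x - Qv x) * u x * v x := by
    intro x hx
    have hux : u x ≠ 0 := (hupos x (hsub hx)).ne'
    calc κ * (v m / u m) ≤ (Qu x - Qv x) * u x ^ 2 * (v x / u x) :=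
          mul_le_mul (hgap x hx)
            (hu.monotoneOn_div hv hupos hp hW hm (hsub hx) hx.1)
            (div_pos (hvpos m hm) (hupos m hm)).le (hκ.trans (hgap x hx))
      _ = (Qu x - Qv x) * u x * v x := by field_simp
  have hmvt := (convex_Icc m n).mul_sub_le_image_sub_of_le_deriv
    (fun x hx => (hderiv x hx).continuousAt.continuousWithinAt)
    (fun x hx => (hderiv x (interior_subset hx)).differentiableAt.differentiableWithinAt)
    (fun x hx => (hderiv x (interior_subset hx)).deriv.symm ▸ hderiv_ge x (interior_subset hx))
    m (left_mem_Icc.2 hmn) n (right_mem_Icc.2 hmn) hmn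
  linarith [hW n hn]

end Comparison

theorem mul_sub_le_div_sub_div (hu : IsSturmLiouvilleSolution p Qu a b u U)
    (hv : IsSturmLiouvilleSolution p Qv a b v V) (hab : a ≤ b)
    (huc : ContinuousOn u (Icc a b)) (hvc : ContinuousOn v (Icc a b))
    (hupos : ∀ x ∈ Icc a b, 0 < u x) {M : ℝ} (huM : ∀ x ∈ Ioo a b, u x ≤ M)
    (hp : ∀ x ∈ Ioo a b, 0 < p x) {G : ℝ → ℝ} (hGc : ContinuousOn G (Icc a b))
    (hG : ∀ x ∈ Ioo a b, HasDerivAt G (1 / p x) x) {ω : ℝ} (hω : 0 ≤ ω)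
    (hW : ∀ x ∈ Ioo a b, fluxWronskian u U v V x ≤ -ω) :
    ω / M ^ 2 * (G b - G a) ≤ v b / u b - v a / u a := by
  have hmono : MonotoneOn (fun x => v x / u x - ω / M ^ 2 * G x) (Icc a b) := by
    refine monotoneOn_of_hasDerivWithinAt_nonneg
      (f' := fun x => -fluxWronskian u U v V x / (p x * u x ^ 2) - ω / M ^ 2 * (1 / p x))
      (convex_Icc a b)
      ((hvc.div huc fun x hx => (hupos x hx).ne').sub (continuousOn_const.mul hGc))
      (fun x hx => ?_) fun x hx => ?_
    all_goals
      rw [interior_Icc] at hx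
      have hux : 0 < u x := hupos x (Ioo_subset_Icc_self hx)
      have hpx : 0 < p x := hp x hx
    · exact ((hu.hasDerivAt_div hv hx hpx.ne' hux.ne').sub
        ((hG x hx).const_mul _)).hasDerivWithinAt
    · have huMx : u x ≤ M := huM x hx
      have hWx : ω ≤ -fluxWronskian u U v V x := le_neg_of_le_neg (hW x hx)
      rw [sub_nonneg]
      calc ω / M ^ 2 * (1 / p x) = ω / (p x * M ^ 2) := by ring
        _ ≤ -fluxWronskian u U v V x / (p x * u x ^ 2) := by gcongr; exact hω.trans hWx
  have := hmono (left_mem_Icc.2 hab) (right_mem_Icc.2 hab) hab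
  linarith

theorem exists_zero_of_lt (hu : IsSturmLiouvilleSolution p Qu a b u U)
    (hv : IsSturmLiouvilleSolution p Qv a b v V) (hab : a < b) (hp : ∀ x ∈ Ioo a b, 0 < p x)
    (hQ : ∀ x ∈ Ioo a b, Qv x < Qu x) (hQv : ContinuousOn Qv (Icc a b))
    (huc : ContinuousOn u (Icc a b)) (hvc : ContinuousOn v (Icc a b))
    (hua : u a = 0) (hub : u b = 0) (hune : ∀ x ∈ Ioo a b, u x ≠ 0) :
    ∃ x ∈ Ioo a b, v x = 0 := by
  by_contra! hvne
  obtain ⟨σ, hσ⟩ := exists_forall_mul_pos_of_isPreconnected isPreconnected_Ioo hu.continuousOn hune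
  obtain ⟨τ, hτ⟩ := exists_forall_mul_pos_of_isPreconnected isPreconnected_Ioo hv.continuousOn hvne
  have hua' : Tendsto u (𝓝[>] a) (𝓝 0) :=
    hua ▸ ((continuousWithinAt_Icc_iff_Ici hab).1 (huc a (left_mem_Icc.2 hab.le))).mono
      Ioi_subset_Ici_self
  have hub' : Tendsto u (𝓝[<] b) (𝓝 0) :=
    hub ▸ ((continuousWithinAt_Icc_iff_Iic hab).1 (huc b (right_mem_Icc.2 hab.le))).mono
      Iio_subset_Iic_self
  exact (hu.const_mul σ).false_of_pos_of_tendsto_zero (hv.const_mul τ) hσ hτ hab hp hQ hQv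
    (continuousOn_const.mul hvc) (by simpa using hua'.const_mul σ) (by simpa using hub'.const_mul σ)

section SingularEndpoint

variable {α M : ℝ} {G δ : ℝ → ℝ} (hu : IsSturmLiouvilleSolution p Qu α b u U)
  (hp : ∀ x ∈ Ioo α b, 0 < p x) (hG : ∀ x ∈ Ioo α b, HasDerivAt G (1 / p x) x)
  (hub : Tendsto u (𝓝[<] b) (𝓝 0))

include hu hp hG hub

theorem mul_sub_le_sq_of_gap (hupos : ∀ x ∈ Ioo α b, 0 < u x) (huM : ∀ x ∈ Ioo α b, u x ≤ M)
    (haα : α < a) (hv : IsSturmLiouvilleSolution p Qv a b v V) (hvc : ContinuousOn v (Icc a b))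
    (hva : v a = 0) (hvpos : ∀ x ∈ Ioo a b, 0 < v x) (hQv : ContinuousOn Qv (Icc a b))
    (hQ : ∀ x ∈ Ioo a b, Qv x ≤ Qu x) {κ m n : ℝ} (hκ : 0 ≤ κ) (ham : a < m) (hmn : m ≤ n)
    (hnb : n < b) (hgap : ∀ x ∈ Icc m n, κ ≤ (Qu x - Qv x) * u x ^ 2) :
    κ * (n - m) * (G m - G a) ≤ M ^ 2 := by
  have hIoo : Ioo a b ⊆ Ioo α b := Ioo_subset_Ioo_left haα.le
  have hIcc : Icc a m ⊆ Ioo α b := Icc_subset_Ioo haα (hmn.trans_lt hnb)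
  have hm : m ∈ Ioo a b := ⟨ham, hmn.trans_lt hnb⟩
  have hn : n ∈ Ioo a b := ⟨ham.trans_le hmn, hnb⟩
  have hu' : IsSturmLiouvilleSolution p Qu a b u U := hu.mono haα.le le_rfl
  have hupos' : ∀ x ∈ Ioo a b, 0 < u x := fun x hx => hupos x (hIoo hx)
  have hp' : ∀ x ∈ Ioo a b, 0 < p x := fun x hx => hp x (hIoo hx)
  have hW : ∀ x ∈ Ioo a b, fluxWronskian u U v V x ≤ 0 := fun x hx =>
    hu'.fluxWronskian_nonpos hv hupos' hvpos hp' hQ hQv hvc hub hx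
  have hWm := hu'.fluxWronskian_le_of_gap hv hupos' hvpos hp' hW hκ hm hn hmn hgap
  have hM : 0 < M := (hupos' m hm).trans_le (huM m (hIoo hm))
  have ht : 0 < v m / u m := div_pos (hvpos m hm) (hupos' m hm)
  have hgrowth : κ * (n - m) * (v m / u m) / M ^ 2 * (G m - G a) ≤ v m / u m - v a / u a :=
    (hu'.mono le_rfl hm.2.le).mul_sub_le_div_sub_div (hv.mono le_rfl hm.2.le) ham.le
      (hu.continuousOn.mono hIcc) (hvc.mono (Icc_subset_Icc_right hm.2.le))
      (fun x hx => hupos x (hIcc hx)) (fun x hx => huM x (hIcc (Ioo_subset_Icc_self hx)))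
      (fun x hx => hp x (hIcc (Ioo_subset_Icc_self hx)))
      (fun x hx => (hG x (hIcc hx)).continuousAt.continuousWithinAt)
      (fun x hx => hG x (hIcc (Ioo_subset_Icc_self hx)))
      (mul_nonneg (mul_nonneg hκ (sub_nonneg.2 hmn)) ht.le)
      fun x hx => (hu'.monotoneOn_fluxWronskian hv hupos' hvpos hQ
        ⟨hx.1, hx.2.trans hm.2⟩ hm hx.2.le).trans hWm
  rw [hva, zero_div, sub_zero] at hgrowth
  have hle : v m / u m * (κ * (n - m) * (G m - G a) / M ^ 2) ≤ v m / u m * 1 := by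
    convert hgrowth using 1 <;> ring
  exact (div_le_one (pow_pos hM 2)).1 (le_of_mul_le_mul_left hle ht)

theorem eventually_exists_zero_of_pos (hαb : α < b) (hGbot : Tendsto G (𝓝[>] α) atBot)
    (hδc : ContinuousOn δ (Ioo α b)) (hδ : ∀ x ∈ Ioo α b, 0 < δ x)
    (hupos : ∀ x ∈ Ioo α b, 0 < u x) (huM : ∀ x ∈ Ioo α b, u x ≤ M) :
    ∀ᶠ a in 𝓝[>] α, ∀ Qv v V, IsSturmLiouvilleSolution p Qv a b v V →
      ContinuousOn v (Icc a b) → v a = 0 → ContinuousOn Qv (Icc a b) →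
      (∀ x ∈ Ioo a b, Qv x + δ x ≤ Qu x) → ∃ x ∈ Ioo a b, v x = 0 := by
  obtain ⟨m, hm⟩ := exists_between hαb
  obtain ⟨n, hn⟩ := exists_between hm.2
  have hmn : Icc m n ⊆ Ioo α b := Icc_subset_Ioo hm.1 hn.2
  obtain ⟨y, hy, hmin⟩ := isCompact_Icc.exists_isMinOn (nonempty_Icc.2 hn.1.le)
    ((hδc.mul (hu.continuousOn.pow 2)).mono hmn)
  set κ := δ y * u y ^ 2
  have hκ : 0 < κ := mul_pos (hδ y (hmn hy)) (pow_pos (hupos y (hmn hy)) 2)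
  have hκmn : 0 < κ * (n - m) := mul_pos hκ (sub_pos.2 hn.1)
  filter_upwards [hGbot.eventually_lt_atBot (G m - M ^ 2 / (κ * (n - m))),
    Ioo_mem_nhdsGT hm.1] with a hGa ha Qv v V hv hvc hva hQv hgap
  have hIoo : Ioo a b ⊆ Ioo α b := Ioo_subset_Ioo_left ha.1.le
  by_contra! hvne
  obtain ⟨τ, hτ⟩ := exists_forall_mul_pos_of_isPreconnected isPreconnected_Ioo hv.continuousOn hvne
  have hle : κ * (n - m) * (G m - G a) ≤ M ^ 2 :=
    hu.mul_sub_le_sq_of_gap hp hG hub hupos huM ha.1 (hv.const_mul τ)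
      (continuousOn_const.mul hvc) (by rw [hva, mul_zero]) hτ hQv
      (fun x hx => by linarith [hgap x hx, hδ x (hIoo hx)]) hκ.le ha.2 hn.1.le hn.2
      fun x hx => (hmin hx).trans <| mul_le_mul_of_nonneg_right
        (le_sub_iff_add_le'.2 (hgap x ⟨ha.2.trans_le hx.1, hx.2.trans_lt hn.2⟩)) (sq_nonneg _)
  rw [← le_div_iff₀' hκmn] at hle
  linarith

theorem eventually_exists_zero (hαb : α < b) (hGbot : Tendsto G (𝓝[>] α) atBot)
    (hδc : ContinuousOn δ (Ioo α b)) (hδ : ∀ x ∈ Ioo α b, 0 < δ x)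
    (hune : ∀ x ∈ Ioo α b, u x ≠ 0) (huM : ∀ x ∈ Ioo α b, |u x| ≤ M) :
    ∀ᶠ a in 𝓝[>] α, ∀ Qv v V, IsSturmLiouvilleSolution p Qv a b v V →
      ContinuousOn v (Icc a b) → v a = 0 → ContinuousOn Qv (Icc a b) →
      (∀ x ∈ Ioo a b, Qv x + δ x ≤ Qu x) → ∃ x ∈ Ioo a b, v x = 0 := by
  obtain ⟨σ, hσ⟩ := exists_forall_mul_pos_of_isPreconnected isPreconnected_Ioo hu.continuousOn hune
  refine (hu.const_mul σ).eventually_exists_zero_of_pos (M := |σ| * M) hp hG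
    (by simpa using hub.const_mul σ) hαb hGbot hδc hδ hσ fun x hx => ?_
  calc σ * u x ≤ |σ * u x| := le_abs_self _
    _ = |σ| * |u x| := abs_mul σ (u x)
    _ ≤ |σ| * M := by gcongr; exact huM x hx

end SingularEndpoint

theorem encard_zeros_add_one_le (hu : IsSturmLiouvilleSolution p Qu a b u U)
    (hv : IsSturmLiouvilleSolution p Qv a b v V) (hab : a < b) (hp : ∀ x ∈ Ioo a b, 0 < p x)
    (hQ : ∀ x ∈ Ioo a b, Qv x < Qu x) (hQv : ContinuousOn Qv (Icc a b))
    (huc : ContinuousOn u (Icc a b)) (hvc : ContinuousOn v (Icc a b))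
    (hua : u a = 0) (hub : u b = 0) (hfin : {x ∈ Ioo a b | u x = 0}.Finite) :
    {x ∈ Ioo a b | u x = 0}.encard + 1 ≤ {x ∈ Ioo a b | v x = 0}.encard := by
  refine encard_add_one_le_encard_of_interlaced hab hfin (fun x hx => hx.1)
    fun x hx y hy hxy hgap => ?_
  obtain ⟨hax, hux⟩ : a ≤ x ∧ u x = 0 := by
    rcases hx with rfl | hx
    exacts [⟨le_rfl, hua⟩, ⟨hx.1.1.le, hx.2⟩]
  obtain ⟨hyb, huy⟩ : y ≤ b ∧ u y = 0 := by
    rcases hy with rfl | hy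
    exacts [⟨le_rfl, hub⟩, ⟨hy.1.2.le, hy.2⟩]
  have hIoo : Ioo x y ⊆ Ioo a b := Ioo_subset_Ioo hax hyb
  have hIcc : Icc x y ⊆ Icc a b := Icc_subset_Icc hax hyb
  obtain ⟨z, hz, hvz⟩ := (hu.mono hax hyb).exists_zero_of_lt (hv.mono hax hyb) hxy
    (fun r hr => hp r (hIoo hr)) (fun r hr => hQ r (hIoo hr)) (hQv.mono hIcc) (huc.mono hIcc)
    (hvc.mono hIcc) hux huy fun r hr hur => disjoint_left.1 hgap ⟨hIoo hr, hur⟩ hr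
  exact ⟨z, ⟨hIoo hz, hvz⟩, hz⟩

theorem eventually_encard_zeros_add_one_le {α M : ℝ} {G δ : ℝ → ℝ}
    (hu : IsSturmLiouvilleSolution p Qu α b u U) (hαb : α < b) (hp : ∀ x ∈ Ioo α b, 0 < p x)
    (hG : ∀ x ∈ Ioo α b, HasDerivAt G (1 / p x) x) (hGbot : Tendsto G (𝓝[>] α) atBot)
    (hδc : ContinuousOn δ (Ioo α b)) (hδ : ∀ x ∈ Ioo α b, 0 < δ x)
    (huc : ContinuousOn u (Ioc α b)) (hub : u b = 0) (huM : ∀ x ∈ Ioo α b, |u x| ≤ M)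
    (hfin : {x ∈ Ioo α b | u x = 0}.Finite) :
    ∀ᶠ a in 𝓝[>] α, ∀ Qv v V, IsSturmLiouvilleSolution p Qv a b v V →
      ContinuousOn v (Icc a b) → v a = 0 → ContinuousOn Qv (Icc a b) →
      (∀ x ∈ Ioo a b, Qv x + δ x ≤ Qu x) →
      {x ∈ Ioo α b | u x = 0}.encard + 1 ≤ {x ∈ Ioo a b | v x = 0}.encard := by
  set S := {x ∈ Ioo α b | u x = 0}
  have hzeros : ∀ x ∈ insert b S, x ∈ Ioc α b ∧ u x = 0 := by
    rintro x (rfl | hx)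
    exacts [⟨right_mem_Ioc.2 hαb, hub⟩, ⟨Ioo_subset_Ioc_self hx.1, hx.2⟩]
  obtain ⟨z, hzS, hzmin⟩ := (hfin.insert b).isCompact.exists_isLeast (insert_nonempty b S)
  obtain ⟨hz, huz⟩ := hzeros z hzS
  have hIooz : Ioo α z ⊆ Ioo α b := Ioo_subset_Ioo_right hz.2
  have huz' : Tendsto u (𝓝[<] z) (𝓝 0) := huz ▸
    ((continuousWithinAt_Ioc_iff_Iic hz.1).1
      ((huc z hz).mono (Ioc_subset_Ioc_right hz.2))).mono Iio_subset_Iic_self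
  filter_upwards [Ioo_mem_nhdsGT hz.1, (hu.mono le_rfl hz.2).eventually_exists_zero
    (fun x hx => hp x (hIooz hx)) (fun x hx => hG x (hIooz hx)) huz' hz.1 hGbot (hδc.mono hIooz)
    (fun x hx => hδ x (hIooz hx))
    (fun x hx hux => (hzmin (mem_insert_of_mem b ⟨hIooz hx, hux⟩)).not_gt hx.2)
    fun x hx => huM x (hIooz hx)] with a ha hfirst Qv v V hv hvc hva hQv hgap
  refine encard_add_one_le_encard_of_interlaced (ha.2.trans_le hz.2) hfin
    (fun x hx => ⟨ha.2.trans_le (hzmin (mem_insert_of_mem b hx)), hx.1.2⟩)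
    fun x hx y hy hxy hdisj => ?_
  obtain ⟨⟨-, hyb⟩, huy⟩ := hzeros y hy
  rcases hx with rfl | hx
  · obtain ⟨r, hr, hvr⟩ := hfirst Qv v V (hv.mono le_rfl hz.2)
      (hvc.mono (Icc_subset_Icc_right hz.2)) hva (hQv.mono (Icc_subset_Icc_right hz.2))
      fun r hr => hgap r ⟨hr.1, hr.2.trans_le hz.2⟩
    exact ⟨r, ⟨⟨hr.1, hr.2.trans_le hz.2⟩, hvr⟩, hr.1, hr.2.trans_le (hzmin hy)⟩
  · have hax : a ≤ x := (ha.2.trans_le (hzmin (mem_insert_of_mem b hx))).le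
    have hIoo : Ioo x y ⊆ Ioo a b := Ioo_subset_Ioo hax hyb
    have hIooα : Ioo x y ⊆ Ioo α b := Ioo_subset_Ioo hx.1.1.le hyb
    have hIcc : Icc x y ⊆ Icc a b := Icc_subset_Icc hax hyb
    obtain ⟨r, hr, hvr⟩ := (hu.mono hx.1.1.le hyb).exists_zero_of_lt (hv.mono hax hyb) hxy
      (fun r hr => hp r (hIooα hr))
      (fun r hr => by linarith [hgap r (hIoo hr), hδ r (hIooα hr)]) (hQv.mono hIcc)
      (huc.mono fun r hr => ⟨hx.1.1.trans_le hr.1, hr.2.trans hyb⟩) (hvc.mono hIcc) hx.2 huy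
      fun r hr hur => disjoint_left.1 hdisj ⟨hIooα hr, hur⟩ hr
    exact ⟨r, ⟨hIoo hr, hvr⟩, hr⟩

end IsSturmLiouvilleSolution

/-- The coefficient `Q` for which the radial equation `φ'' + φ' / r - c φ / r² + μ φ = 0`,
multiplied by `r`, becomes the Sturm-Liouville equation `(r φ')' = Q φ`, with `p r = r`. -/
noncomputable def radialPotential (c μ r : ℝ) : ℝ := c / r - μ * r

theorem isSturmLiouvilleSolution_of_radial {c μ a b : ℝ} {φ : ℝ → ℝ} (ha : 0 ≤ a)
    (hφ : ContDiffOn ℝ 2 φ (Ioo a b))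
    (hode : ∀ r ∈ Ioo a b,
      deriv (deriv φ) r + deriv φ r / r - c * φ r / r ^ 2 + μ * φ r = 0) :
    IsSturmLiouvilleSolution id (radialPotential c μ) a b φ (fun r => r * deriv φ r) where
  hasDerivAt r hr := by
    have hr0 : r ≠ 0 := (ha.trans_lt hr.1).ne'
    refine ((hφ.differentiableOn two_ne_zero).differentiableAt
      (isOpen_Ioo.mem_nhds hr)).hasDerivAt.congr_deriv ?_
    rw [id, mul_div_cancel_left₀ _ hr0]
  hasDerivAt_flux r hr := by
    have hr0 : r ≠ 0 := (ha.trans_lt hr.1).ne'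
    have hφ' : ContDiffOn ℝ 1 (deriv φ) (Ioo a b) :=
      hφ.deriv_of_isOpen isOpen_Ioo one_add_one_eq_two.le
    have hφ'' : HasDerivAt (deriv φ) (deriv (deriv φ) r) r :=
      ((hφ'.differentiableOn one_ne_zero).differentiableAt (isOpen_Ioo.mem_nhds hr)).hasDerivAt
    refine ((hasDerivAt_id r).mul hφ'').congr_deriv ?_
    have hsolve : deriv (deriv φ) r = c * φ r / r ^ 2 - deriv φ r / r - μ * φ r := by
      linarith [hode r hr]
    rw [hsolve, id, radialPotential]
    field_simp
    ring

theorem continuousOn_radialPotential (c μ : ℝ) {a b : ℝ} (ha : 0 < a) :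
    ContinuousOn (radialPotential c μ) (Icc a b) :=
  (continuousOn_const.div continuousOn_id fun _ hr => (ha.trans_le hr.1).ne').sub
    (continuousOn_const.mul continuousOn_id)

theorem radial_eigenvalue_le_of_encard_zeros_le {c μ ν a b : ℝ} {u U v V : ℝ → ℝ} (ha : 0 < a)
    (hab : a < b)
    (hu : IsSturmLiouvilleSolution id (radialPotential c μ) a b u U)
    (hv : IsSturmLiouvilleSolution id (radialPotential c ν) a b v V)
    (huc : ContinuousOn u (Icc a b)) (hvc : ContinuousOn v (Icc a b)) (hua : u a = 0)
    (hub : u b = 0) (hfin : {r ∈ Ioo a b | u r = 0}.Finite)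
    (hle : {r ∈ Ioo a b | v r = 0}.encard ≤ {r ∈ Ioo a b | u r = 0}.encard) : ν ≤ μ := by
  by_contra! hlt
  have hinterlace := hu.encard_zeros_add_one_le hv hab (fun r hr => ha.trans hr.1)
    (fun r hr => sub_lt_sub_left (mul_lt_mul_of_pos_right hlt (ha.trans hr.1)) _)
    (continuousOn_radialPotential c ν ha) huc hvc hua hub hfin
  exact (hinterlace.trans hle).not_gt (ENat.lt_add_one_iff hfin.encard_lt_top.ne |>.2 le_rfl)

theorem eventually_radial_eigenvalue_lt_of_encard_zeros_le {c μ ν b M : ℝ} {u U : ℝ → ℝ}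
    (hb : 0 < b)
    (hu : IsSturmLiouvilleSolution id (radialPotential c μ) 0 b u U)
    (huc : ContinuousOn u (Ioc 0 b)) (huM : ∀ r ∈ Ioo 0 b, |u r| ≤ M) (hub : u b = 0)
    (hfin : {r ∈ Ioo 0 b | u r = 0}.Finite) (hμν : μ < ν) :
    ∀ᶠ a in 𝓝[>] 0, ∀ η v V, IsSturmLiouvilleSolution id (radialPotential c η) a b v V →
      ContinuousOn v (Icc a b) → v a = 0 →
      {r ∈ Ioo a b | v r = 0}.encard ≤ {r ∈ Ioo 0 b | u r = 0}.encard → η < ν := by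
  filter_upwards [hu.eventually_encard_zeros_add_one_le hb (fun r hr => hr.1)
    (fun r hr => one_div r ▸ hasDerivAt_log hr.1.ne') tendsto_log_nhdsGT_zero
    (continuousOn_const.mul continuousOn_id) (fun r hr => mul_pos (sub_pos.2 hμν) hr.1)
    huc hub huM hfin, self_mem_nhdsWithin] with a hcount ha η v V hv hvc hva hle
  by_contra! hνη
  have hgap : ∀ r ∈ Ioo a b, radialPotential c η r + (ν - μ) * r ≤ radialPotential c μ r := by
    intro r hr
    have := mul_le_mul_of_nonneg_right hνη (ha.trans hr.1).le
    simp only [radialPotential]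
    linarith
  have hinterlace := hcount _ v V hv hvc hva (continuousOn_radialPotential c η ha) hgap
  exact (hinterlace.trans hle).not_gt (ENat.lt_add_one_iff hfin.encard_lt_top.ne |>.2 le_rfl)

theorem dirichlet_eigenvalues_converge_to_disk_general
    {ι : Type*} {f : Filter ι} (c : ℝ) (k : ℕ)
    (a : ι → ℝ) (ha : ∀ j, a j ∈ Ioo (0 : ℝ) 1) (ha0 : Tendsto a f (𝓝 0))
    (μ : ι → ℝ)
    (hμ : ∀ j, ∃ φ : ℝ → ℝ, ContDiffOn ℝ 2 φ (Ioo (a j) 1) ∧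
      (∀ r ∈ Ioo (a j) 1, deriv (deriv φ) r + deriv φ r / r
        - c * φ r / r ^ 2 + μ j * φ r = 0) ∧
      ContinuousOn φ (Icc (a j) 1) ∧ φ (a j) = 0 ∧ φ 1 = 0 ∧
      {r ∈ Ioo (a j) 1 | φ r = 0}.encard = (k : ℕ∞))
    (μ0 : ℝ)
    (hμ0 : ∃ φ : ℝ → ℝ, ContDiffOn ℝ 2 φ (Ioo (0 : ℝ) 1) ∧
      (∀ r ∈ Ioo (0 : ℝ) 1, deriv (deriv φ) r + deriv φ r / r
        - c * φ r / r ^ 2 + μ0 * φ r = 0) ∧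
      ContinuousOn φ (Ioc 0 1) ∧ (∃ M, ∀ r ∈ Ioo (0 : ℝ) 1, |φ r| ≤ M) ∧ φ 1 = 0 ∧
      {r ∈ Ioo (0 : ℝ) 1 | φ r = 0}.encard = (k : ℕ∞)) :
    Tendsto μ f (𝓝 μ0) := by
  obtain ⟨φ, hφ2, hφode, hφc, ⟨M, hφM⟩, hφ1, hφk⟩ := hμ0
  choose ψ hψ2 hψode hψc hψa hψ1 hψk using hμ
  have hφ := isSturmLiouvilleSolution_of_radial le_rfl hφ2 hφode
  have hψ := fun j => isSturmLiouvilleSolution_of_radial (ha j).1.le (hψ2 j) (hψode j)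
  have hfin : {r ∈ Ioo (0 : ℝ) 1 | φ r = 0}.Finite := finite_of_encard_eq_coe hφk
  have hlower : ∀ j, μ0 ≤ μ j := by
    intro j
    have hsub : Ioo (a j) 1 ⊆ Ioo 0 1 := Ioo_subset_Ioo_left (ha j).1.le
    refine radial_eigenvalue_le_of_encard_zeros_le (ha j).1 (ha j).2 (hψ j)
      (hφ.mono (ha j).1.le le_rfl) (hψc j) (hφc.mono fun r hr => ⟨(ha j).1.trans_le hr.1, hr.2⟩)
      (hψa j) (hψ1 j) (finite_of_encard_eq_coe (hψk j)) ?_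
    rw [hψk j, ← hφk]
    exact encard_le_encard fun r hr => ⟨hsub hr.1, hr.2⟩
  have ha0' : Tendsto a f (𝓝[>] 0) :=
    tendsto_nhdsWithin_iff.2 ⟨ha0, Eventually.of_forall fun j => (ha j).1⟩
  have hupper : ∀ ν, μ0 < ν → ∀ᶠ j in f, μ j < ν := by
    intro ν hν
    filter_upwards [ha0'.eventually (eventually_radial_eigenvalue_lt_of_encard_zeros_le zero_lt_one
      hφ hφc hφM hφ1 hfin hν)] with j hj
    exact hj (μ j) (ψ j) _ (hψ j) (hψc j) (hψa j) (by rw [hψk j, hφk])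
  exact tendsto_order.2
    ⟨fun ν hν => Eventually.of_forall fun j => hν.trans_le (hlower j), hupper⟩

/-- As `a → 0`, the `l`-mode Dirichlet eigenvalues `λ_{l,k}(a)` of
the annulus `{a < |x| < 1}` converge to the corresponding `l`-mode Dirichlet eigenvalue
of the unit disk. -/
theorem dirichlet_eigenvalues_converge_to_disk
    (l k : ℕ) (hl : 1 ≤ l)
    (a : ℕ → ℝ) (ha : ∀ j, a j ∈ Set.Ioo (0:ℝ) 1)
    (ha0 : Tendsto a atTop (nhds 0))
    (μ : ℕ → ℝ)
    (hμ : ∀ j, ∃ φ : ℝ → ℝ, ContDiffOn ℝ 2 φ (Set.Icc (a j) 1) ∧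
      (∀ r ∈ Set.Ioo (a j) 1, deriv (deriv φ) r + deriv φ r / r
        - (l:ℝ)^2 * φ r / r^2 + μ j * φ r = 0) ∧
      φ (a j) = 0 ∧ φ 1 = 0 ∧ (∃ r ∈ Set.Icc (a j) 1, φ r ≠ 0) ∧
      {r ∈ Set.Ioo (a j) 1 | φ r = 0}.encard = (k : ℕ∞))
    (μ0 : ℝ)
    (hμ0 : ∃ φ : ℝ → ℝ, ContDiffOn ℝ 2 φ (Set.Ioo (0:ℝ) 1) ∧
      (∀ r ∈ Set.Ioo (0:ℝ) 1, deriv (deriv φ) r + deriv φ r / r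
        - (l:ℝ)^2 * φ r / r^2 + μ0 * φ r = 0) ∧
      ContinuousOn φ (Set.Icc (0:ℝ) 1) ∧ φ 0 = 0 ∧ φ 1 = 0 ∧
      (∃ r ∈ Set.Icc (0:ℝ) 1, φ r ≠ 0) ∧
      IntegrableOn (fun r => (deriv φ r^2 + φ r^2 / r^2) * r) (Set.Ioo 0 1) ∧
      {r ∈ Set.Ioo (0:ℝ) 1 | φ r = 0}.encard = (k : ℕ∞)) :
    Tendsto μ atTop (nhds μ0) := by
  obtain ⟨φ, hφ, hode, hφc, -, hφ1, -, -, hk⟩ := hμ0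
  obtain ⟨M, hM⟩ := isCompact_Icc.exists_bound_of_continuousOn hφc
  choose ψ hψ hψode hψa hψ1 _ hψk using hμ
  exact dirichlet_eigenvalues_converge_to_disk_general ((l : ℝ) ^ 2) k a ha ha0 μ
    (fun j => ⟨ψ j, (hψ j).mono Ioo_subset_Icc_self, hψode j, (hψ j).continuousOn, hψa j, hψ1 j,
      hψk j⟩) μ0
    ⟨φ, hφ, hode, hφc.mono Ioc_subset_Icc_self, ⟨M, fun r hr => hM r (Ioo_subset_Icc_self hr)⟩,
      hφ1, hk⟩
end

section
/- Let χ : [0,∞) → [0,1] be a smooth function with χ ≡ 1 on [0,1] and χ ≡ 0 on [2,∞). Let φ : (0,1] → ℝ be continuous and differentiable on (0,1), with lim_{r→0⁺} φ(r) = 0 and ∫₀¹ ( φ'(r)² + φ(r)²/r² ) r dr < ∞. For ε ∈ (0,1/2) define φ_ε(r) := χ(r/ε) φ(r). Then ∫₀¹ ( φ_ε'(r)² + φ_ε(r)²/r² ) r dr → 0 as ε → 0⁺. (Consequently (1 − χ(·/ε))φ → φ in the weighted space H with norm ‖φ‖²_H = ∫₀¹ (φ'² + φ²/r²) r dr, so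 functions vanishing near 0 are dense in H.) -/
open Set Real Filter MeasureTheory

open scoped Topology

/-!
The Euler derivative `x ↦ x χ'(x)` commutes with dilations: with `x = r / ε`,
`(χ(·/ε) φ)'(r) = χ(x) φ'(r) + x χ'(x) φ(r) / r`.
By Cauchy–Schwarz the energy density of the cut-off function is therefore at most
`2 χ(x)² + (x χ'(x))²` times that of `φ`. This factor is bounded, and for fixed `r > 0` it tends
to `0` as `ε → 0⁺` because `r / ε → ∞`, so dominated convergence applies.
-/

section Definitions

variable {E : Type*} [NormedAddCommGroup E] [NormedSpace ℝ E]

/-- The function `φ_ε = χ(·/ε) φ`, which localizes `φ` to the scale `ε` near the origin. -/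
noncomputable def cutoff (χ : ℝ → ℝ) (ε : ℝ) (φ : ℝ → E) : ℝ → E :=
  fun r => χ (r / ε) • φ r

/-- The integrand `(|φ'|² + |φ|² / r²) r` of the squared norm of the weighted space `H`. -/
noncomputable def energyDensity (φ : ℝ → E) (r : ℝ) : ℝ :=
  (‖deriv φ r‖ ^ 2 + ‖φ r‖ ^ 2 / r ^ 2) * r

/-- The Euler derivative `x χ'(x)`, the generator of dilations applied to `χ`. -/
noncomputable def eulerDeriv (χ : ℝ → ℝ) (x : ℝ) : ℝ :=
  x * deriv χ x

end Definitions

section Profile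

theorem exists_norm_le_of_continuousOn_Ici_of_tendsto {F : Type*} [SeminormedAddCommGroup F]
    {f : ℝ → F} {a : ℝ} {l : F} (hf : ContinuousOn f (Ici a)) (hl : Tendsto f atTop (𝓝 l)) :
    ∃ C, ∀ x ∈ Ici a, ‖f x‖ ≤ C := by
  obtain ⟨b, hb⟩ := eventually_atTop.1 (hl.norm.eventually_le_const (lt_add_one ‖l‖))
  obtain ⟨C, hC⟩ := isCompact_Icc.exists_bound_of_continuousOn (hf.mono Icc_subset_Ici_self)
  refine ⟨max C (‖l‖ + 1), fun x hx => ?_⟩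
  rcases le_total x b with hxb | hbx
  · exact le_max_of_le_left (hC x ⟨hx, hxb⟩)
  · exact le_max_of_le_right (hb x hbx)

theorem eulerDeriv_eventuallyEq_zero {χ : ℝ → ℝ} (hχ : χ =ᶠ[atTop] 0) :
    eulerDeriv χ =ᶠ[atTop] 0 := by
  obtain ⟨b, hb⟩ := eventually_atTop.1 hχ
  filter_upwards [eventually_gt_atTop b] with x hx
  have hχx : χ =ᶠ[𝓝 x] fun _ => 0 := (lt_mem_nhds hx).mono fun y hy => hb y hy.le
  simp [eulerDeriv, hχx.deriv_eq]

end Profile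

section PointwiseBounds

variable {E : Type*} [NormedAddCommGroup E] [NormedSpace ℝ E]

theorem norm_smul_add_smul_sq_le {V : Type*} [SeminormedAddCommGroup V] [NormedSpace ℝ V]
    (a b : ℝ) (u v : V) :
    ‖a • u + b • v‖ ^ 2 ≤ (a ^ 2 + b ^ 2) * (‖u‖ ^ 2 + ‖v‖ ^ 2) := by
  calc ‖a • u + b • v‖ ^ 2
      ≤ (|a| * ‖u‖ + |b| * ‖v‖) ^ 2 := by
        gcongr
        simpa only [norm_smul, norm_eq_abs] using norm_add_le (a • u) (b • v)
    _ ≤ (|a| ^ 2 + |b| ^ 2) * (‖u‖ ^ 2 + ‖v‖ ^ 2) := by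
        linarith [sq_nonneg (|a| * ‖v‖ - |b| * ‖u‖)]
    _ = (a ^ 2 + b ^ 2) * (‖u‖ ^ 2 + ‖v‖ ^ 2) := by simp only [sq_abs]

theorem energyDensity_nonneg (φ : ℝ → E) {r : ℝ} (hr : 0 ≤ r) : 0 ≤ energyDensity φ r := by
  unfold energyDensity
  positivity

theorem energyDensity_real (φ : ℝ → ℝ) :
    energyDensity φ = fun r => (deriv φ r ^ 2 + φ r ^ 2 / r ^ 2) * r := by
  ext r
  simp only [energyDensity, norm_eq_abs, sq_abs]

theorem hasDerivAt_cutoff {χ : ℝ → ℝ} {φ : ℝ → E} {ε r : ℝ} (hr : r ≠ 0)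
    (hχ : DifferentiableAt ℝ χ (r / ε)) (hφ : DifferentiableAt ℝ φ r) :
    HasDerivAt (cutoff χ ε φ)
      (χ (r / ε) • deriv φ r + eulerDeriv χ (r / ε) • r⁻¹ • φ r) r := by
  have hχε : HasDerivAt (fun s => χ (s / ε)) (deriv χ (r / ε) * (1 / ε)) r :=
    hχ.hasDerivAt.comp r ((hasDerivAt_id r).div_const ε)
  have hscale : deriv χ (r / ε) * (1 / ε) = eulerDeriv χ (r / ε) * r⁻¹ := by
    unfold eulerDeriv
    field_simp
  rw [smul_smul, ← hscale]
  exact hχε.smul hφ.hasDerivAt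

theorem energyDensity_cutoff_le {χ : ℝ → ℝ} {φ : ℝ → E} {ε r : ℝ} (hr : 0 < r)
    (hχ : DifferentiableAt ℝ χ (r / ε)) (hφ : DifferentiableAt ℝ φ r) :
    energyDensity (cutoff χ ε φ) r ≤
      (2 * χ (r / ε) ^ 2 + eulerDeriv χ (r / ε) ^ 2) * energyDensity φ r := by
  have hderiv : ‖deriv (cutoff χ ε φ) r‖ ^ 2 ≤
      (χ (r / ε) ^ 2 + eulerDeriv χ (r / ε) ^ 2) * (‖deriv φ r‖ ^ 2 + ‖φ r‖ ^ 2 / r ^ 2) := by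
    rw [(hasDerivAt_cutoff hr.ne' hχ hφ).deriv]
    refine (norm_smul_add_smul_sq_le _ _ _ _).trans_eq ?_
    rw [norm_smul, mul_pow, norm_inv, inv_pow, norm_eq_abs, sq_abs, inv_mul_eq_div]
  have hvalue : ‖cutoff χ ε φ r‖ ^ 2 / r ^ 2 ≤
      χ (r / ε) ^ 2 * (‖deriv φ r‖ ^ 2 + ‖φ r‖ ^ 2 / r ^ 2) := by
    rw [cutoff, norm_smul, mul_pow, norm_eq_abs, sq_abs, mul_div_assoc]
    gcongr
    exact le_add_of_nonneg_left (sq_nonneg _)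
  unfold energyDensity
  rw [← mul_assoc]
  gcongr
  linarith

end PointwiseBounds

section Convergence

variable {E : Type*} [NormedAddCommGroup E] [NormedSpace ℝ E]

theorem tendsto_integral_zero_of_norm_le_comp_div_mul {μ : Measure ℝ} {F : ℝ → ℝ → E}
    {κ g : ℝ → ℝ} {C : ℝ} (hμ : ∀ᵐ r ∂μ, 0 < r)
    (hκ : Tendsto κ atTop (𝓝 0)) (hκC : ∀ x, 0 < x → κ x ≤ C) (hg : Integrable g μ)
    (hF : ∀ ε, 0 < ε → AEStronglyMeasurable (F ε) μ)
    (hFg : ∀ᵐ r ∂μ, ∀ ε, 0 < ε → ‖F ε r‖ ≤ κ (r / ε) * ‖g r‖) :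
    Tendsto (fun ε => ∫ r, F ε r ∂μ) (𝓝[>] 0) (𝓝 0) := by
  rw [← integral_zero ℝ E (μ := μ)]
  refine tendsto_integral_filter_of_dominated_convergence (fun r => C * ‖g r‖)
    (eventually_mem_nhdsWithin.mono hF) ?_ (hg.norm.const_mul C) ?_
  · filter_upwards [self_mem_nhdsWithin] with ε (hε : 0 < ε)
    filter_upwards [hμ, hFg] with r hr hFr
    calc ‖F ε r‖ ≤ κ (r / ε) * ‖g r‖ := hFr ε hε
      _ ≤ C * ‖g r‖ := by gcongr; exact hκC _ (div_pos hr hε)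
  · filter_upwards [hμ, hFg] with r hr hFr
    have hdiv : Tendsto (fun ε => r / ε) (𝓝[>] 0) atTop := by
      simpa only [div_eq_mul_inv] using tendsto_inv_nhdsGT_zero.const_mul_atTop hr
    have hbound : Tendsto (fun ε => κ (r / ε) * ‖g r‖) (𝓝[>] 0) (𝓝 0) := by
      simpa only [zero_mul, Function.comp_apply] using (hκ.comp hdiv).mul_const ‖g r‖
    exact squeeze_zero_norm' (eventually_mem_nhdsWithin.mono hFr) hbound

theorem aestronglyMeasurable_energyDensity [CompleteSpace E] {φ : ℝ → E} {μ : Measure ℝ}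
    (hφ : AEStronglyMeasurable φ μ) : AEStronglyMeasurable (energyDensity φ) μ := by
  have hderiv : AEStronglyMeasurable (deriv φ) μ := aestronglyMeasurable_deriv φ μ
  have hpow : AEStronglyMeasurable (fun r : ℝ => r ^ 2) μ := by fun_prop
  exact ((hderiv.norm.pow 2).add ((hφ.norm.pow 2).div₀ hpow)).mul aestronglyMeasurable_id

theorem cutoff_tendsto_zero_in_H_general [CompleteSpace E] {μ : Measure ℝ} {Ω : Set ℝ}
    (hΩ : IsOpen Ω) (hΩ_pos : Ω ⊆ Ioi 0) {χ : ℝ → ℝ} {C M : ℝ}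
    (hχ : DifferentiableOn ℝ χ (Ioi 0))
    (hχC : ∀ x, 0 < x → ‖χ x‖ ≤ C) (hχM : ∀ x, 0 < x → ‖eulerDeriv χ x‖ ≤ M)
    (hχ_lim : Tendsto χ atTop (𝓝 0)) (hχ'_lim : Tendsto (eulerDeriv χ) atTop (𝓝 0))
    {φ : ℝ → E} (hφ : DifferentiableOn ℝ φ Ω) (hφ_int : IntegrableOn (energyDensity φ) Ω μ) :
    Tendsto (fun ε => ∫ r in Ω, energyDensity (cutoff χ ε φ) r ∂μ) (𝓝[>] 0) (𝓝 0) := by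
  have hχ_at {r ε : ℝ} (hr : r ∈ Ω) (hε : 0 < ε) : DifferentiableAt ℝ χ (r / ε) :=
    hχ.differentiableAt (Ioi_mem_nhds (div_pos (hΩ_pos hr) hε))
  have hφ_at {r : ℝ} (hr : r ∈ Ω) : DifferentiableAt ℝ φ r :=
    hφ.differentiableAt (hΩ.mem_nhds hr)
  refine tendsto_integral_zero_of_norm_le_comp_div_mul
    (κ := fun x => 2 * χ x ^ 2 + eulerDeriv χ x ^ 2) (C := 2 * C ^ 2 + M ^ 2)
    (ae_restrict_of_forall_mem hΩ.measurableSet hΩ_pos) ?_ (fun x hx => ?_) hφ_int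
    (fun ε hε => ?_) (ae_restrict_of_forall_mem hΩ.measurableSet fun r hr ε hε => ?_)
  · simpa using ((hχ_lim.pow 2).const_mul 2).add (hχ'_lim.pow 2)
  · have hχ_sq : χ x ^ 2 ≤ C ^ 2 := sq_le_sq.2 ((hχC x hx).trans (le_abs_self C))
    have hχ'_sq : eulerDeriv χ x ^ 2 ≤ M ^ 2 := sq_le_sq.2 ((hχM x hx).trans (le_abs_self M))
    linarith
  · have hcont : ContinuousOn (cutoff χ ε φ) Ω := fun r hr =>
      (hasDerivAt_cutoff (hΩ_pos hr).ne' (hχ_at hr hε)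
        (hφ_at hr)).continuousAt.continuousWithinAt
    exact aestronglyMeasurable_energyDensity (hcont.aestronglyMeasurable hΩ.measurableSet)
  · have hr_nonneg : 0 ≤ r := (hΩ_pos hr).le
    rw [norm_of_nonneg (energyDensity_nonneg _ hr_nonneg),
      norm_of_nonneg (energyDensity_nonneg _ hr_nonneg)]
    exact energyDensity_cutoff_le (hΩ_pos hr) (hχ_at hr hε) (hφ_at hr)

end Convergence

/-- Cutting off near the origin with `χ(·/ε)` produces functions whose
weighted `H`-norm tends to `0` as `ε → 0⁺`; hence functions vanishing near `0` are
dense in the weighted space `H`. -/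
theorem cutoff_tendsto_zero_in_H
    (χ : ℝ → ℝ) (hχ : ContDiff ℝ (⊤ : ℕ∞) χ)
    (hχ01 : ∀ x : ℝ, 0 ≤ x → χ x ∈ Set.Icc (0:ℝ) 1)
    (hχ1 : ∀ x ∈ Set.Icc (0:ℝ) 1, χ x = 1)
    (hχ0 : ∀ x : ℝ, 2 ≤ x → χ x = 0)
    (φ : ℝ → ℝ)
    (hφc : ContinuousOn φ (Set.Ioc 0 1))
    (hφd : DifferentiableOn ℝ φ (Set.Ioo 0 1))
    (hφ0 : Tendsto φ (nhdsWithin 0 (Set.Ioi 0)) (nhds 0))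
    (hφint : IntegrableOn (fun r => (deriv φ r^2 + φ r^2 / r^2) * r) (Set.Ioo 0 1)) :
    Tendsto (fun ε : ℝ => ∫ r in Set.Ioo (0:ℝ) 1,
        (deriv (fun s => χ (s/ε) * φ s) r^2 + (χ (r/ε) * φ r)^2 / r^2) * r)
      (nhdsWithin 0 (Set.Ioi 0)) (nhds 0) := by
  have hχ_zero : χ =ᶠ[atTop] 0 := (eventually_ge_atTop 2).mono hχ0
  have hχ_lim : Tendsto χ atTop (𝓝 0) := tendsto_const_nhds.congr' hχ_zero.symm
  have hχ'_lim : Tendsto (eulerDeriv χ) atTop (𝓝 0) :=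
    tendsto_const_nhds.congr' (eulerDeriv_eventuallyEq_zero hχ_zero).symm
  have hχ'_cont : Continuous (eulerDeriv χ) := continuous_id.mul (hχ.continuous_deriv (by simp))
  obtain ⟨C, hC⟩ := exists_norm_le_of_continuousOn_Ici_of_tendsto (a := 0)
    hχ.continuous.continuousOn hχ_lim
  obtain ⟨M, hM⟩ := exists_norm_le_of_continuousOn_Ici_of_tendsto (a := 0)
    hχ'_cont.continuousOn hχ'_lim
  have hφ_int : IntegrableOn (energyDensity φ) (Ioo 0 1) := by rwa [energyDensity_real]
  have hlim := cutoff_tendsto_zero_in_H_general isOpen_Ioo Ioo_subset_Ioi_self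
    (hχ.differentiable (by simp)).differentiableOn (fun x hx => hC x hx.le)
    (fun x hx => hM x hx.le) hχ_lim hχ'_lim hφd hφ_int
  simp only [energyDensity_real] at hlim
  exact hlim
end

section
/- For every integer l ≥ 1 there exists a₀ ∈ (0,1) such that for every a ∈ (a₀,1) the following holds: if μ > 0 is such that the Neumann problem ψ''(r) + ψ'(r)/r + μψ(r) = 0 on (a,1) with ψ'(a) = ψ'(1) = 0 has a nonconstant C² solution with exactly two zeros in (a,1), and λ > 0 is such that the Dirichlet problem φ''(r) + φ'(r)/r − l²φ(r)/r² + λφ(r) = 0 on (a,1) with φ(a) = φ(1) = 0 has a C² solution which is positive on (a,1), then μ > λ. (That is, μ_{0,2}(a) > λ_{l,0}(a) whenever a is sufficiently close to 1.) -/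
open Set Real

/-- `μ` is the second nontrivial radial Neumann eigenvalue of the annulus
`{a < |x| < 1}`: the radial Neumann problem has a nonconstant `C²` solution with exactly
two zeros in `(a,1)`. -/
def NeumannMu02 (a μ : ℝ) : Prop :=
  ∃ ψ : ℝ → ℝ, ContDiffOn ℝ 2 ψ (Set.Icc a 1) ∧
    (∀ r ∈ Set.Ioo a 1, deriv (deriv ψ) r + deriv ψ r / r + μ * ψ r = 0) ∧
    derivWithin ψ (Set.Icc a 1) a = 0 ∧ derivWithin ψ (Set.Icc a 1) 1 = 0 ∧
    (∃ r ∈ Set.Icc a 1, ψ r ≠ ψ a) ∧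
    {r ∈ Set.Ioo a 1 | ψ r = 0}.encard = 2

/-- `μ` is the first `l`-mode Dirichlet eigenvalue of the annulus `{a < |x| < 1}`:
the `l`-mode Dirichlet problem has a `C²` solution positive on `(a,1)`. -/
def DirichletLam0 (a μ : ℝ) (l : ℕ) : Prop :=
  ∃ φ : ℝ → ℝ, ContDiffOn ℝ 2 φ (Set.Icc a 1) ∧
    (∀ r ∈ Set.Ioo a 1, deriv (deriv φ) r + deriv φ r / r
      - (l:ℝ)^2 * φ r / r^2 + μ * φ r = 0) ∧
    φ a = 0 ∧ φ 1 = 0 ∧ (∀ r ∈ Set.Ioo a 1, 0 < φ r)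

/-!
The substitution `v = √r · y` turns the radial equation `y'' + y'/r + (μ - κ/r²) y = 0` into
`v'' + (μ - (κ - 1/4)/r²) v = 0`, which is compared with `v'' + ω² v = 0`.

The derivative of a radial Neumann solution solves the equation with `κ = 1`. It vanishes at `a`,
at `1`, and by Rolle at a point `c` between the two zeros. As `μ - 3/(4r²) < μ`, two zeros of a
nontrivial solution are at distance at least `π/√μ`, so `2π ≤ √μ (1 - a)`. On the Dirichlet side,
comparison with `sin` gives `λ - (l² - 1/4)/r² = (π/(1 - a))²` at some `r ∈ (a, 1)`, hence
`λ < (π/(1 - a))² + l²/a²`, which is below `(2π/(1 - a))² ≤ μ` once `1 - a` is small.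
-/

theorem eq_zero_of_hasDerivAt_nonneg_of_eq {F f : ℝ → ℝ} {p q : ℝ}
    (hF : ContinuousOn F (Icc p q)) (hderiv : ∀ r ∈ Ioo p q, HasDerivAt F (f r) r)
    (hf : ∀ r ∈ Ioo p q, 0 ≤ f r) (hpq : F p = F q) {r : ℝ} (hr : r ∈ Ioo p q) : f r = 0 := by
  have hmono : MonotoneOn F (Icc p q) := by
    refine monotoneOn_of_hasDerivWithinAt_nonneg (f' := f) (convex_Icc p q) hF ?_ ?_ <;>
      rw [interior_Icc]
    exacts [fun s hs => (hderiv s hs).hasDerivWithinAt, hf]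
  have hle : p ≤ q := (hr.1.trans hr.2).le
  have hconst : ∀ s ∈ Icc p q, F s = F p := fun s hs =>
    le_antisymm ((hmono hs (right_mem_Icc.2 hle) hs.2).trans_eq hpq.symm)
      (hmono (left_mem_Icc.2 hle) hs hs.1)
  have hlocal : F =ᶠ[nhds r] fun _ => F p := by
    filter_upwards [Icc_mem_nhds hr.1 hr.2] using hconst
  exact (hderiv r hr).unique ((hasDerivAt_const r (F p)).congr_of_eventuallyEq hlocal)

/-- `y` solves the linear equation `y'' + P y' + Q y = 0` on `(p, q)` and is `C¹` up to the
endpoints. The derivative `z` is carried along as data, so that its boundary values and its own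
equation can be used without mentioning one-sided derivatives. -/
structure IsLinearODESolution (P Q : ℝ → ℝ) (p q : ℝ) (y z : ℝ → ℝ) : Prop where
  continuousOn : ContinuousOn y (Icc p q)
  continuousOn_deriv : ContinuousOn z (Icc p q)
  hasDerivAt : ∀ r ∈ Ioo p q, HasDerivAt y (z r) r
  hasDerivAt_deriv : ∀ r ∈ Ioo p q, HasDerivAt z (-(P r * z r + Q r * y r)) r

/-- The radial equation `y'' + y'/r + (μ - κ/r²) y = 0`, where `κ` is the square of the angular
mode; `κ = 0` for radial eigenfunctions. -/
abbrev IsRadialSolution (κ μ : ℝ) (p q : ℝ) (y z : ℝ → ℝ) : Prop :=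
  IsLinearODESolution (fun r => r⁻¹) (fun r => μ - κ / r ^ 2) p q y z

namespace IsLinearODESolution

variable {P Q y z : ℝ → ℝ} {p q : ℝ}

theorem of_contDiffOn (hpq : p < q) (hy : ContDiffOn ℝ 2 y (Icc p q))
    (hode : ∀ r ∈ Ioo p q, deriv (deriv y) r + P r * deriv y r + Q r * y r = 0) :
    IsLinearODESolution P Q p q y (derivWithin y (Icc p q)) := by
  have hy' : ContDiffOn ℝ 1 (derivWithin y (Icc p q)) (Icc p q) :=
    hy.derivWithin (uniqueDiffOn_Icc hpq) (by norm_num)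
  have hderiv : ∀ r ∈ Ioo p q, derivWithin y (Icc p q) r = deriv y r := fun r hr =>
    derivWithin_of_mem_nhds (Icc_mem_nhds hr.1 hr.2)
  refine ⟨hy.continuousOn, hy'.continuousOn, fun r hr => ?_, fun r hr => ?_⟩ <;>
    have hnhds : Icc p q ∈ nhds r := Icc_mem_nhds hr.1 hr.2
  · rw [hderiv r hr]
    exact ((hy.contDiffAt hnhds).differentiableAt (by norm_num)).hasDerivAt
  · have hlocal : derivWithin y (Icc p q) =ᶠ[nhds r] deriv y := by
      filter_upwards [Ioo_mem_nhds hr.1 hr.2] using hderiv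
    refine ((hy'.contDiffAt hnhds).differentiableAt (by norm_num)).hasDerivAt.congr_deriv ?_
    rw [hlocal.deriv_eq, hderiv r hr]
    linarith [hode r hr]

theorem mono (h : IsLinearODESolution P Q p q y z) {p' q' : ℝ} (hp : p ≤ p') (hq : q' ≤ q) :
    IsLinearODESolution P Q p' q' y z where
  continuousOn := h.continuousOn.mono (Icc_subset_Icc hp hq)
  continuousOn_deriv := h.continuousOn_deriv.mono (Icc_subset_Icc hp hq)
  hasDerivAt r hr := h.hasDerivAt r (Ioo_subset_Ioo hp hq hr)
  hasDerivAt_deriv r hr := h.hasDerivAt_deriv r (Ioo_subset_Ioo hp hq hr)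

theorem exists_deriv_eq_zero (h : IsLinearODESolution P Q p q y z) (hpq : p < q)
    (hy : y p = y q) : ∃ c ∈ Ioo p q, z c = 0 :=
  exists_hasDerivAt_eq_zero hpq h.continuousOn hy h.hasDerivAt

theorem exists_deriv_ne_zero (h : IsLinearODESolution P Q p q y z) {s t : ℝ}
    (hs : s ∈ Icc p q) (ht : t ∈ Icc p q) (hne : y s ≠ y t) : ∃ c ∈ Ioo p q, z c ≠ 0 := by
  wlog hst : s < t generalizing s t
  · exact this ht hs hne.symm (lt_of_le_of_ne (not_lt.1 hst) fun hts => hne (by rw [hts]))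
  have hsub := h.mono hs.1 ht.2
  obtain ⟨c, hc, hslope⟩ :=
    exists_hasDerivAt_eq_slope y z hst hsub.continuousOn hsub.hasDerivAt
  refine ⟨c, Ioo_subset_Ioo hs.1 ht.2 hc, ?_⟩
  rw [hslope]
  exact div_ne_zero (sub_ne_zero.2 hne.symm) (sub_ne_zero.2 hst.ne')

/-- Picone's identity: with `c = cos (ω (r - m))`, the function differentiated is
`y² (y'/y - c'/c)`. -/
theorem hasDerivAt_picone (h : IsLinearODESolution 0 Q p q y z) {ω m r : ℝ} (hr : r ∈ Ioo p q)
    (hcos : cos (ω * (r - m)) ≠ 0) :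
    HasDerivAt (fun r => y r * (z r + ω * tan (ω * (r - m)) * y r))
      ((z r + ω * tan (ω * (r - m)) * y r) ^ 2 + (ω ^ 2 - Q r) * y r ^ 2) r := by
  have hphase : HasDerivAt (fun r => ω * (r - m)) ω r := by
    simpa using ((hasDerivAt_id r).sub_const m).const_mul ω
  have htan : HasDerivAt (fun r => tan (ω * (r - m))) ((1 + tan (ω * (r - m)) ^ 2) * ω) r := by
    rw [← inv_inv (1 + _ ^ 2), inv_one_add_tan_sq hcos, ← one_div]
    exact (hasDerivAt_tan hcos).comp r hphase
  have hy := h.hasDerivAt r hr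
  refine (hy.mul ((h.hasDerivAt_deriv r hr).add ((htan.const_mul ω).mul hy))).congr_deriv ?_
  simp only [Pi.zero_apply, Pi.add_apply, Pi.mul_apply]
  ring

theorem pi_le_mul_of_lt_sq (h : IsLinearODESolution 0 Q p q y z) {ω : ℝ} (hω : 0 ≤ ω)
    (hQ : ∀ r ∈ Ioo p q, Q r < ω ^ 2) (hyp : y p = 0) (hyq : y q = 0) {s : ℝ}
    (hs : s ∈ Ioo p q) (hys : y s ≠ 0) : π ≤ ω * (q - p) := by
  by_contra! hlt
  -- Centring the phase keeps `tan` away from its poles on `[p, q]`.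
  set m := (p + q) / 2 with hm
  have hcos : ∀ r ∈ Icc p q, cos (ω * (r - m)) ≠ 0 := fun r hr =>
    (cos_pos_of_mem_Ioo ⟨by nlinarith [hr.1], by nlinarith [hr.2]⟩).ne'
  have htan : ContinuousOn (fun r => tan (ω * (r - m))) (Icc p q) :=
    continuousOn_tan.comp (by fun_prop) hcos
  have hy := h.continuousOn
  have hz := h.continuousOn_deriv
  have hpos : ∀ r ∈ Ioo p q, 0 < ω ^ 2 - Q r := fun r hr => sub_pos.2 (hQ r hr)
  have hzero := eq_zero_of_hasDerivAt_nonneg_of_eq (by fun_prop)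
    (fun r hr => h.hasDerivAt_picone (m := m) hr (hcos r (Ioo_subset_Icc_self hr)))
    (fun r hr => by have := hpos r hr; positivity) (by simp only [hyp, hyq, zero_mul]) hs
  have := hpos s hs
  exact (by positivity : 0 < _ + (ω ^ 2 - Q s) * y s ^ 2).ne' hzero

/-- Rolle's theorem for the Wronskian of `y` and `sin (π (r - p) / (q - p))`. -/
theorem exists_eq_sq_pi_div (h : IsLinearODESolution 0 Q p q y z) (hpq : p < q)
    (hyp : y p = 0) (hyq : y q = 0) (hy : ∀ r ∈ Ioo p q, y r ≠ 0) :
    ∃ r ∈ Ioo p q, Q r = (π / (q - p)) ^ 2 := by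
  have hlen : 0 < q - p := sub_pos.2 hpq
  set ω := π / (q - p)
  have hωpos : 0 < ω := div_pos pi_pos hlen
  have hωπ : ω * (q - p) = π := div_mul_cancel₀ π hlen.ne'
  have hyc := h.continuousOn
  have hzc := h.continuousOn_deriv
  obtain ⟨r, hr, hzero⟩ := exists_hasDerivAt_eq_zero
    (f := fun r => z r * sin (ω * (r - p)) - y r * (ω * cos (ω * (r - p))))
    (f' := fun r => (ω ^ 2 - Q r) * (y r * sin (ω * (r - p)))) hpq (by fun_prop)
    (by simp [hyp, hyq, hωπ]) fun r hr => by
      have hphase : HasDerivAt (fun r => ω * (r - p)) ω r := by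
        simpa using ((hasDerivAt_id r).sub_const p).const_mul ω
      refine (((h.hasDerivAt_deriv r hr).mul hphase.sin).sub
        ((h.hasDerivAt r hr).mul (hphase.cos.const_mul ω))).congr_deriv ?_
      simp only [Pi.zero_apply]
      ring
  have hsin : 0 < sin (ω * (r - p)) :=
    sin_pos_of_pos_of_lt_pi (mul_pos hωpos (sub_pos.2 hr.1))
      (hωπ ▸ mul_lt_mul_of_pos_left (sub_lt_sub_right hr.2 p) hωpos)
  have hprod := (mul_eq_zero.1 hzero).resolve_right (mul_ne_zero (hy r hr) hsin.ne')
  exact ⟨r, hr, (sub_eq_zero.1 hprod).symm⟩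

end IsLinearODESolution

theorem hasDerivAt_sqrt_mul {y : ℝ → ℝ} {y' r : ℝ} (hr : 0 < r) (hy : HasDerivAt y y' r) :
    HasDerivAt (fun r => √r * y r) (√r * (y' + y r / (2 * r))) r := by
  have hsqrt : 1 / (2 * √r) = √r / (2 * r) := by
    have := mul_self_sqrt hr.le
    field_simp
    linarith
  refine ((hasDerivAt_sqrt hr.ne').mul hy).congr_deriv ?_
  rw [hsqrt]
  ring

namespace IsRadialSolution

variable {κ μ p q : ℝ} {y z : ℝ → ℝ}

theorem liouville (h : IsRadialSolution κ μ p q y z) (hp : 0 < p) :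
    IsLinearODESolution 0 (fun r => μ - (κ - 1 / 4) / r ^ 2) p q
      (fun r => √r * y r) (fun r => √r * (z r + y r / (2 * r))) := by
  have hy := h.continuousOn
  have hz := h.continuousOn_deriv
  have hquot : ContinuousOn (fun r => y r / (2 * r)) (Icc p q) :=
    hy.div (by fun_prop) fun r hr => (mul_pos two_pos (hp.trans_le hr.1)).ne'
  refine ⟨by fun_prop, by fun_prop,
    fun r hr => hasDerivAt_sqrt_mul (hp.trans hr.1) (h.hasDerivAt r hr), fun r hr => ?_⟩
  have hr0 : 0 < r := hp.trans hr.1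
  have hinner : HasDerivAt (fun r => z r + y r / (2 * r)) _ r :=
    (h.hasDerivAt_deriv r hr).add
      ((h.hasDerivAt r hr).div ((hasDerivAt_id' r).const_mul 2) (by positivity))
  refine (hasDerivAt_sqrt_mul hr0 hinner).congr_deriv ?_
  simp only [Pi.zero_apply]
  field_simp
  ring

theorem derivative (h : IsRadialSolution 0 μ p q y z) (hp : 0 < p) :
    IsRadialSolution 1 μ p q z (fun r => -(r⁻¹ * z r + μ * y r)) := by
  have hy := h.continuousOn
  have hz := h.continuousOn_deriv
  have hinv : ContinuousOn (fun r : ℝ => r⁻¹) (Icc p q) :=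
    continuousOn_id.inv₀ fun r hr => (hp.trans_le hr.1).ne'
  have hz' : ∀ r ∈ Ioo p q, HasDerivAt z (-(r⁻¹ * z r + μ * y r)) r := by
    simpa only [zero_div, sub_zero] using h.hasDerivAt_deriv
  refine ⟨hz, by fun_prop, hz', fun r hr => ?_⟩
  have hr0 : r ≠ 0 := (hp.trans hr.1).ne'
  refine (((hasDerivAt_inv hr0).mul (hz' r hr)).add
    ((h.hasDerivAt r hr).const_mul μ)).neg.congr_deriv ?_
  field_simp
  ring

theorem pi_le_sqrt_mul_of_neumann (h : IsRadialSolution 0 μ p q y z) (hp : 0 < p)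
    (hzp : z p = 0) (hzq : z q = 0) {s t : ℝ} (hs : s ∈ Icc p q) (ht : t ∈ Icc p q)
    (hne : y s ≠ y t) : π ≤ √μ * (q - p) := by
  obtain ⟨c, hc, hzc⟩ := h.exists_deriv_ne_zero hs ht hne
  refine ((h.derivative hp).liouville hp).pi_le_mul_of_lt_sq (sqrt_nonneg μ) (fun r hr => ?_)
    (by simp only [hzp, mul_zero]) (by simp only [hzq, mul_zero]) hc
    (mul_ne_zero (sqrt_pos.2 (hp.trans hc.1)).ne' hzc)
  have hr0 : 0 < r := hp.trans hr.1
  calc μ - (1 - 1 / 4) / r ^ 2 < μ := sub_lt_self μ (by norm_num; positivity)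
    _ ≤ √μ ^ 2 := (sqrt_le_left (sqrt_nonneg μ)).1 le_rfl

theorem two_pi_le_sqrt_mul_of_neumann (h : IsRadialSolution 0 μ p q y z) (hp : 0 < p)
    (hzp : z p = 0) (hzq : z q = 0) (hfin : {r ∈ Ioo p q | y r = 0}.Finite) {s t : ℝ}
    (hs : s ∈ Ioo p q) (ht : t ∈ Ioo p q) (hst : s < t) (hys : y s = 0) (hyt : y t = 0) :
    2 * π ≤ √μ * (q - p) := by
  have hne : ∀ {b c}, p ≤ b → b < c → c ≤ q → ∃ r ∈ Icc b c, y r ≠ 0 := by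
    intro b c hb hbc hc
    by_contra! hall
    exact Ioo_infinite hbc (hfin.subset fun r hr =>
      ⟨Ioo_subset_Ioo hb hc hr, hall r (Ioo_subset_Icc_self hr)⟩)
  obtain ⟨c, hc, hzc⟩ := (h.mono hs.1.le ht.2.le).exists_deriv_eq_zero hst (hys.trans hyt.symm)
  have hpc : p < c := hs.1.trans hc.1
  have hcq : c < q := hc.2.trans ht.2
  obtain ⟨r₁, hr₁, hy₁⟩ := hne le_rfl hpc hcq.le
  obtain ⟨r₂, hr₂, hy₂⟩ := hne hpc.le hcq le_rfl
  have hleft : π ≤ √μ * (c - p) := pi_le_sqrt_mul_of_neumann (h.mono le_rfl hcq.le) hp hzp hzc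
    hr₁ ⟨hs.1.le, hc.1.le⟩ (hys ▸ hy₁)
  have hright : π ≤ √μ * (q - c) := pi_le_sqrt_mul_of_neumann (h.mono hpc.le le_rfl)
    (hp.trans hpc) hzc hzq hr₂ ⟨hc.2.le, ht.2.le⟩ (hyt ▸ hy₂)
  linarith

theorem lt_of_dirichlet (h : IsRadialSolution κ μ p q y z) (hκ : 0 ≤ κ) (hp : 0 < p) (hpq : p < q)
    (hyp : y p = 0) (hyq : y q = 0) (hy : ∀ r ∈ Ioo p q, y r ≠ 0) :
    μ < (π / (q - p)) ^ 2 + κ / p ^ 2 := by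
  obtain ⟨r, hr, heq⟩ := (h.liouville hp).exists_eq_sq_pi_div hpq (by simp only [hyp, mul_zero])
    (by simp only [hyq, mul_zero])
    fun r hr => mul_ne_zero (sqrt_pos.2 (hp.trans hr.1)).ne' (hy r hr)
  have hr0 : 0 < r := hp.trans hr.1
  calc μ = (π / (q - p)) ^ 2 + (κ - 1 / 4) / r ^ 2 := by rw [← heq]; ring
    _ < (π / (q - p)) ^ 2 + κ / r ^ 2 := by gcongr; linarith
    _ ≤ (π / (q - p)) ^ 2 + κ / p ^ 2 := by gcongr; exact hr.1.le

end IsRadialSolution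

theorem NeumannMu02.sq_two_pi_div_le {a μ : ℝ} (h : NeumannMu02 a μ) (ha : a ∈ Ioo (0 : ℝ) 1) :
    (2 * π / (1 - a)) ^ 2 ≤ μ := by
  obtain ⟨ψ, hC, hode, hψa, hψ1, -, hcard⟩ := h
  have hsol : IsRadialSolution 0 μ a 1 ψ (derivWithin ψ (Icc a 1)) :=
    .of_contDiffOn ha.2 hC fun r hr => by linear_combination hode r hr
  have hlen : 0 < 1 - a := sub_pos.2 ha.2
  have hfin : {r ∈ Ioo a 1 | ψ r = 0}.Finite := finite_of_encard_eq_coe (k := 2) hcard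
  obtain ⟨s, t, hst, hset⟩ := encard_eq_two.1 hcard
  have hs : s ∈ {r ∈ Ioo a 1 | ψ r = 0} := hset ▸ mem_insert s {t}
  have ht : t ∈ {r ∈ Ioo a 1 | ψ r = 0} := hset ▸ mem_insert_of_mem s rfl
  rw [← le_sqrt' (by positivity), div_le_iff₀ hlen]
  rcases hst.lt_or_gt with hlt | hgt
  · exact hsol.two_pi_le_sqrt_mul_of_neumann ha.1 hψa hψ1 hfin hs.1 ht.1 hlt hs.2 ht.2
  · exact hsol.two_pi_le_sqrt_mul_of_neumann ha.1 hψa hψ1 hfin ht.1 hs.1 hgt ht.2 hs.2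

theorem DirichletLam0.lt_sq_pi_div_add {a lam : ℝ} {l : ℕ} (h : DirichletLam0 a lam l)
    (ha : a ∈ Ioo (0 : ℝ) 1) : lam < (π / (1 - a)) ^ 2 + (l : ℝ) ^ 2 / a ^ 2 := by
  obtain ⟨φ, hC, hode, hφa, hφ1, hpos⟩ := h
  have hsol : IsRadialSolution ((l : ℝ) ^ 2) lam a 1 φ (derivWithin φ (Icc a 1)) :=
    .of_contDiffOn ha.2 hC fun r hr => by linear_combination hode r hr
  exact hsol.lt_of_dirichlet (sq_nonneg _) ha.1 ha.2 hφa hφ1 fun r hr => (hpos r hr).ne'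

theorem mu02_gt_laml0_near_one_general {a μ lam : ℝ} {l : ℕ}
    (ha : a ∈ Ioo (l / (l + √3 * π)) 1) (hN : NeumannMu02 a μ) (hD : DirichletLam0 a lam l) :
    lam < μ := by
  have ha0 : 0 < a := lt_of_le_of_lt (by positivity) ha.1
  have hratio : (l : ℝ) / a ≤ √3 * (π / (1 - a)) := by
    have hthreshold : l < a * (l + √3 * π) := (div_lt_iff₀ (by positivity)).1 ha.1
    rw [← mul_div_assoc, div_le_div_iff₀ ha0 (sub_pos.2 ha.2)]
    linarith
  calc lam < (π / (1 - a)) ^ 2 + (l : ℝ) ^ 2 / a ^ 2 := hD.lt_sq_pi_div_add ⟨ha0, ha.2⟩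
    _ = (π / (1 - a)) ^ 2 + (l / a) ^ 2 := by rw [div_pow (l : ℝ) a]
    _ ≤ (π / (1 - a)) ^ 2 + (√3 * (π / (1 - a))) ^ 2 := by gcongr
    _ = (2 * π / (1 - a)) ^ 2 := by rw [mul_pow, sq_sqrt zero_le_three]; ring
    _ ≤ μ := hN.sq_two_pi_div_le ⟨ha0, ha.2⟩

/-- For each `l ≥ 1`, `μ_{0,2}(a) > λ_{l,0}(a)` whenever `a` is
sufficiently close to `1`. -/
theorem mu02_gt_laml0_near_one (l : ℕ) (hl : 1 ≤ l) :
    ∃ a₀ ∈ Set.Ioo (0:ℝ) 1, ∀ a ∈ Set.Ioo a₀ 1, ∀ μ > (0:ℝ), ∀ lam > (0:ℝ),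
      NeumannMu02 a μ → DirichletLam0 a lam l → lam < μ := by
  refine ⟨l / (l + √3 * π), ⟨by positivity, (div_lt_one (by positivity)).2 ?_⟩,
    fun a ha μ _ lam _ hN hD => mu02_gt_laml0_near_one_general ha hN hD⟩
  exact lt_add_of_pos_right _ (by positivity)
end
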